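/- arXiv:1311.3512 — 8 statements merged into one kernel-verified Lean document; each statement's English description precedes it below -/
import Mathlib

section
/- Let n ≥ 1 and let −1 = z₀ < z₁ < ⋯ < z_n < z_{n+1} = 1 be an axisymmetric configuration with pattern u, mass m, and function ξ as in the context, and set ξ_k := ξ(z_k). Then ∫_{−1}^{1} ξ(z)²/(1−z²) dz = −2 + 2m² + Σ_{k=0}^{n−1} ((ξ_k − ((−1)^k + m)(1 − z_k))²/2)·log((1−z_k)/(1−z_{k+1})) + Σ_{k=1}^{n} ((ξ_k + ((−1)^k + m)(1 + z_k))²/2)·log((1+z_{k+1})/(1+z_k)). (This is the nonlocal part of the energy E_γ of an axisymmetric pattern on the sphere, up to the factor 2πγ; the omitted boundary terms k = n of the first sum and k = 0 of the second sum have vanishing coefficients.) -/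
/-!
On `[z k, z (k+1)]` the function `ξ` is affine, `ξ(t) = ξ_k - c_k (t - z k)` with
`c_k = (-1)^k + m`. Writing `A_k = ξ_k - c_k (1 - z k)` and `B_k = ξ_k + c_k (1 + z k)` for the
values at `1` and `-1` of this affine function, partial fractions give
`ξ² / (1 - t²) = -c_k² + (A_k² / 2) / (1 - t) + (B_k² / 2) / (1 + t)`.
Each piece is then integrated explicitly (`piece_integral`) and the pieces are summed. The singular
terms vanish because `ξ(±1) = 0` means `A_n = 0` and `B_0 = 0`, and
`∑ c_k² (z (k+1) - z k) = 2 - 2 m²` follows from `∑ (-1)^(k+1) (z (k+1) - z k) = 2 m`.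
-/

/-- The axisymmetric step pattern with `n` interfaces located at `z 1 < ⋯ < z n`
(with `z 0 = -1`, `z (n+1) = 1`): `u(t) = (-1)^(k+1)` for `t ∈ [z k, z (k+1))`,
so `u = -1` on `[-1, z 1)`. -/
noncomputable def pattern (n : ℕ) (z : ℕ → ℝ) (t : ℝ) : ℝ :=
  (-1 : ℝ) ^ (((Finset.Icc 1 n).filter (fun i => z i ≤ t)).card + 1)

/-- The mass `m = (1/2)∫_{-1}^1 u(t) dt`. -/
noncomputable def mass (n : ℕ) (z : ℕ → ℝ) : ℝ :=
  (1 / 2) * ∫ t in (-1 : ℝ)..1, pattern n z t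

/-- `ξ(t) = ∫_{-1}^t (u(s) - m) ds`. -/
noncomputable def xi (n : ℕ) (z : ℕ → ℝ) (t : ℝ) : ℝ :=
  ∫ s in (-1 : ℝ)..t, (pattern n z s - mass n z)

/-- The potential `v(t) = ∫_0^t ξ(s)/(1-s²) ds`. -/
noncomputable def pot (n : ℕ) (z : ℕ → ℝ) (t : ℝ) : ℝ :=
  ∫ s in (0 : ℝ)..t, xi n z s / (1 - s ^ 2)

/-- `z` is an axisymmetric configuration with `n` interfaces:
`-1 = z 0 < z 1 < ⋯ < z n < z (n+1) = 1`. -/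
def IsConfig (n : ℕ) (z : ℕ → ℝ) : Prop :=
  z 0 = -1 ∧ z (n + 1) = 1 ∧ ∀ i j, i < j → j ≤ n + 1 → z i < z j

/-- The configuration is a critical point of `E_γ`: the Euler–Lagrange equation
`κ_g(z_k) + 4γ v(z_k) = λ` holds at every interface `z 1, …, z n`, with a single
constant `λ`; here `κ_g(z_k) = (-1)^(k+1) z_k / √(1 - z_k²)` is the signed geodesic
curvature of the interface circle with respect to the outer normal of `{u = 1}`. -/
def IsCritical (γ : ℝ) (n : ℕ) (z : ℕ → ℝ) : Prop :=
  ∃ lam : ℝ, ∀ k, 1 ≤ k → k ≤ n →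
    (-1 : ℝ) ^ (k + 1) * z k / Real.sqrt (1 - z k ^ 2) + 4 * γ * pot n z (z k) = lam

open MeasureTheory intervalIntegral Set

/-- The hypothesis `q = 1 → A = 0` excludes the only case in which the integrand is singular. -/
lemma right_term (A p q : ℝ) (hpq : p < q) (hq : q ≤ 1) (hA : q = 1 → A = 0) :
    IntervalIntegrable (fun t => A ^ 2 / 2 * (1 - t)⁻¹) volume p q ∧
    ∫ t in p..q, A ^ 2 / 2 * (1 - t)⁻¹ = A ^ 2 / 2 * Real.log ((1 - p) / (1 - q)) := by
  rcases hq.eq_or_lt with h | h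
  · simp [hA h]
  · constructor
    · apply ContinuousOn.intervalIntegrable
      rw [uIcc_of_le hpq.le]
      refine continuousOn_const.mul (ContinuousOn.inv₀ (by fun_prop) ?_)
      rintro t ⟨_, ht⟩
      linarith
    · rw [intervalIntegral.integral_const_mul,
        intervalIntegral.integral_comp_sub_left (fun t => t⁻¹) 1,
        integral_inv_of_pos (by linarith) (by linarith)]

/-- The hypothesis `p = -1 → B = 0` excludes the only case in which the integrand is singular. -/
lemma left_term (B p q : ℝ) (hpq : p < q) (hp : -1 ≤ p) (hB : p = -1 → B = 0) :
    IntervalIntegrable (fun t => B ^ 2 / 2 * (1 + t)⁻¹) volume p q ∧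
    ∫ t in p..q, B ^ 2 / 2 * (1 + t)⁻¹ = B ^ 2 / 2 * Real.log ((1 + q) / (1 + p)) := by
  rcases hp.eq_or_lt with h | h
  · simp [hB h.symm]
  · constructor
    · apply ContinuousOn.intervalIntegrable
      rw [uIcc_of_le hpq.le]
      refine continuousOn_const.mul (ContinuousOn.inv₀ (by fun_prop) ?_)
      rintro t ⟨ht, _⟩
      linarith
    · rw [intervalIntegral.integral_const_mul,
        intervalIntegral.integral_comp_add_left (fun t => t⁻¹) 1,
        integral_inv_of_pos (by linarith) (by linarith)]

/-- The contribution of one interval on which `f` is affine, by partial fractions. -/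
lemma piece_integral (f : ℝ → ℝ) (x c p q : ℝ) (hpq : p < q) (hp : -1 ≤ p) (hq : q ≤ 1)
    (hf : ∀ t ∈ Icc p q, f t = x - c * (t - p))
    (hA : q = 1 → x - c * (1 - p) = 0) (hB : p = -1 → x + c * (1 + p) = 0) :
    IntervalIntegrable (fun t => f t ^ 2 / (1 - t ^ 2)) volume p q ∧
    ∫ t in p..q, f t ^ 2 / (1 - t ^ 2) =
      -(c ^ 2 * (q - p))
      + (x - c * (1 - p)) ^ 2 / 2 * Real.log ((1 - p) / (1 - q))
      + (x + c * (1 + p)) ^ 2 / 2 * Real.log ((1 + q) / (1 + p)) := by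
  obtain ⟨iA, eA⟩ := right_term _ p q hpq hq hA
  obtain ⟨iB, eB⟩ := left_term _ p q hpq hp hB
  have i0 : IntervalIntegrable (fun _ : ℝ => -c ^ 2) volume p q := intervalIntegrable_const
  have key : ∀ t ∈ Ioo p q,
      -c ^ 2 + (x - c * (1 - p)) ^ 2 / 2 * (1 - t)⁻¹ + (x + c * (1 + p)) ^ 2 / 2 * (1 + t)⁻¹
        = f t ^ 2 / (1 - t ^ 2) := by
    rintro t ⟨h1, h2⟩
    rw [hf t ⟨h1.le, h2.le⟩]
    have a1 : 1 - t ≠ 0 := by linarith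
    have a2 : 1 + t ≠ 0 := by linarith
    rw [show 1 - t ^ 2 = (1 - t) * (1 + t) by ring]
    field_simp
    ring
  have key' : ∀ᵐ t ∂volume, t ∈ uIoc p q →
      -c ^ 2 + (x - c * (1 - p)) ^ 2 / 2 * (1 - t)⁻¹ + (x + c * (1 + p)) ^ 2 / 2 * (1 + t)⁻¹
        = f t ^ 2 / (1 - t ^ 2) := by
    have : ∀ᵐ t : ℝ ∂volume, t ≠ q := by simp [ae_iff]
    filter_upwards [this] with t ht hm
    rw [uIoc_of_le hpq.le] at hm
    exact key t ⟨hm.1, lt_of_le_of_ne hm.2 ht⟩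
  constructor
  · exact ((i0.add iA).add iB).congr_ae ((ae_restrict_iff' measurableSet_uIoc).2 key')
  · rw [← intervalIntegral.integral_congr_ae key', intervalIntegral.integral_add (i0.add iA) iB,
      intervalIntegral.integral_add i0 iA, eA, eB, intervalIntegral.integral_const]
    simp only [smul_eq_mul]
    ring

lemma pattern_eq {n : ℕ} {z : ℕ → ℝ} (hz : IsConfig n z) {k : ℕ} (hk : k ≤ n) {t : ℝ}
    (ht : t ∈ Ico (z k) (z (k + 1))) : pattern n z t = (-1) ^ (k + 1) := by
  have hmono := hz.2.2
  have : (Finset.Icc 1 n).filter (fun i => z i ≤ t) = Finset.Icc 1 k := by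
    ext i
    simp only [Finset.mem_filter, Finset.mem_Icc]
    constructor
    · rintro ⟨⟨h1, h2⟩, h3⟩
      refine ⟨h1, ?_⟩
      by_contra hlt
      have : z (k + 1) ≤ z i := by
        rcases (show k + 1 ≤ i by omega).eq_or_lt with h | h
        · rw [h]
        · exact (hmono _ _ h (by omega)).le
      linarith [ht.2]
    · rintro ⟨h1, h2⟩
      refine ⟨⟨h1, by omega⟩, ?_⟩
      rcases h2.eq_or_lt with h | h
      · rw [h]; exact ht.1
      · exact (hmono _ _ h (by omega)).le.trans ht.1
  rw [pattern, this]
  simp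

lemma pattern_ae {n : ℕ} {z : ℕ → ℝ} (hz : IsConfig n z) {k : ℕ} (hk : k ≤ n) {t : ℝ}
    (ht : t ∈ Icc (z k) (z (k + 1))) :
    ∀ᵐ s ∂volume, s ∈ uIoc (z k) t → (-1 : ℝ) ^ (k + 1) = pattern n z s := by
  have : ∀ᵐ s : ℝ ∂volume, s ≠ z (k + 1) := by simp [ae_iff]
  filter_upwards [this] with s hs hm
  rw [uIoc_of_le ht.1] at hm
  exact (pattern_eq hz hk ⟨hm.1.le, lt_of_le_of_ne (hm.2.trans ht.2) hs⟩).symm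

lemma pattern_piece {n : ℕ} {z : ℕ → ℝ} (hz : IsConfig n z) {k : ℕ} (hk : k ≤ n) {t : ℝ}
    (ht : t ∈ Icc (z k) (z (k + 1))) :
    IntervalIntegrable (pattern n z) volume (z k) t ∧
      ∫ s in (z k)..t, pattern n z s = (-1) ^ (k + 1) * (t - z k) := by
  have h := pattern_ae hz hk ht
  constructor
  · exact (intervalIntegrable_const (c := (-1 : ℝ) ^ (k + 1))).congr_ae
      ((ae_restrict_iff' measurableSet_uIoc).2 h)
  · rw [← intervalIntegral.integral_congr_ae h, intervalIntegral.integral_const, smul_eq_mul,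
      mul_comm]

/-- The nonlocal part of the energy of an axisymmetric pattern:
`∫_{-1}^1 ξ(z)²/(1-z²) dz` equals the explicit expression
`-2 + 2m² + Σ_{k=0}^{n-1} ((ξ_k - ((-1)^k+m)(1-z_k))²/2) log((1-z_k)/(1-z_{k+1}))
 + Σ_{k=1}^{n} ((ξ_k + ((-1)^k+m)(1+z_k))²/2) log((1+z_{k+1})/(1+z_k))`. -/
theorem nonlocal_energy_formula (n : ℕ) (hn : 1 ≤ n) (z : ℕ → ℝ) (hz : IsConfig n z) :
    (∫ t in (-1 : ℝ)..1, (xi n z t) ^ 2 / (1 - t ^ 2)) =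
      -2 + 2 * (mass n z) ^ 2
      + ∑ k ∈ Finset.range n,
          ((xi n z (z k) - ((-1 : ℝ) ^ k + mass n z) * (1 - z k)) ^ 2 / 2) *
            Real.log ((1 - z k) / (1 - z (k + 1)))
      + ∑ k ∈ Finset.Icc 1 n,
          ((xi n z (z k) + ((-1 : ℝ) ^ k + mass n z) * (1 + z k)) ^ 2 / 2) *
            Real.log ((1 + z (k + 1)) / (1 + z k)) := by
  have h0 := hz.1
  have h1 := hz.2.1
  have hmono := hz.2.2
  have hstep : ∀ k ≤ n, z k < z (k + 1) := fun k hk => hmono _ _ (by omega) (by omega)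
  have hlow : ∀ k ≤ n + 1, -1 ≤ z k := by
    intro k hk
    rcases Nat.eq_zero_or_pos k with h | h
    · rw [h, h0]
    · rw [← h0]; exact (hmono _ _ h hk).le
  have hend : ∀ k ≤ n, z (k + 1) = 1 → k = n := by
    intro k hk h
    by_contra hne
    have := hmono (k + 1) (n + 1) (by omega) le_rfl
    linarith
  have hhigh : ∀ k ≤ n, z (k + 1) ≤ 1 := by
    intro k hk
    rcases hk.eq_or_lt with h | h
    · rw [h, h1]
    · rw [← h1]; exact (hmono _ _ (by omega) le_rfl).le
  have hpiece : ∀ k ≤ n, IntervalIntegrable (pattern n z) volume (z k) (z (k + 1)) :=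
    fun k hk => (pattern_piece hz hk ⟨(hstep k hk).le, le_rfl⟩).1
  have hzk : ∀ k ≤ n + 1, IntervalIntegrable (pattern n z) volume (-1) (z k) := by
    intro k hk
    rw [← h0]
    exact IntervalIntegrable.trans_iterate fun j hj => hpiece j (by omega)
  set m := mass n z with hm
  have hmass : ∫ t in (-1 : ℝ)..1, pattern n z t = 2 * m := by rw [hm, mass]; ring
  have hsum : ∑ k ∈ Finset.range (n + 1), (-1 : ℝ) ^ (k + 1) * (z (k + 1) - z k) = 2 * m := by
    have hadj := sum_integral_adjacent_intervals (n := n + 1) (fun k hk => hpiece k (by omega))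
    rw [h0, h1] at hadj
    rw [← hmass, ← hadj]
    refine Finset.sum_congr rfl fun k hk => ?_
    rw [Finset.mem_range] at hk
    exact (pattern_piece hz (by omega) ⟨(hstep k (by omega)).le, le_rfl⟩).2.symm
  have hxi : ∀ k ≤ n, ∀ t ∈ Icc (z k) (z (k + 1)),
      xi n z t = xi n z (z k) - ((-1) ^ k + m) * (t - z k) := by
    intro k hk t ht
    obtain ⟨ip, ep⟩ := pattern_piece hz hk ht
    have ic : ∀ a b : ℝ, IntervalIntegrable (fun _ => m) volume a b :=
      fun a b => intervalIntegrable_const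
    rw [xi, xi, ← intervalIntegral.integral_add_adjacent_intervals
      ((hzk k (by omega)).sub (ic _ _)) (ip.sub (ic _ _)),
      intervalIntegral.integral_sub ip (ic _ _), ep, intervalIntegral.integral_const, smul_eq_mul,
      pow_succ]
    ring
  have hxi0 : xi n z (-1) = 0 := by simp [xi]
  have hxi1 : xi n z 1 = 0 := by
    have := hzk (n + 1) le_rfl
    rw [h1] at this
    rw [xi, intervalIntegral.integral_sub this intervalIntegrable_const, hmass,
      intervalIntegral.integral_const, smul_eq_mul]
    ring
  have hAn : xi n z (z n) - ((-1) ^ n + m) * (1 - z n) = 0 := by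
    have := hxi n le_rfl 1 ⟨by linarith [hstep n le_rfl], h1.ge⟩
    rw [← this, hxi1]
  have hB0 : xi n z (z 0) + ((-1) ^ 0 + m) * (1 + z 0) = 0 := by
    rw [h0, hxi0]; ring
  have hmain : ∀ k ≤ n, _ := fun k hk =>
    piece_integral (xi n z) (xi n z (z k)) ((-1) ^ k + m) (z k) (z (k + 1)) (hstep k hk)
      (hlow k (by omega)) (hhigh k hk) (hxi k hk)
      (fun h => by obtain rfl := hend k hk h; exact hAn)
      (fun h => by rw [h, hxi0]; ring)
  have hc : ∑ k ∈ Finset.range (n + 1), ((-1 : ℝ) ^ k + m) ^ 2 * (z (k + 1) - z k)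
      = 2 - 2 * m ^ 2 := by
    have e : ∀ k : ℕ, ((-1 : ℝ) ^ k + m) ^ 2 * (z (k + 1) - z k)
        = (1 + m ^ 2) * (z (k + 1) - z k) - 2 * m * ((-1 : ℝ) ^ (k + 1) * (z (k + 1) - z k)) := by
      intro k
      have : ((-1 : ℝ) ^ k) ^ 2 = 1 := by rw [← pow_mul, mul_comm, pow_mul]; simp
      rw [pow_succ]
      linear_combination (z (k + 1) - z k) * this
    rw [Finset.sum_congr rfl fun k _ => e k, Finset.sum_sub_distrib, ← Finset.mul_sum,
      ← Finset.mul_sum, hsum, Finset.sum_range_sub, h0, h1]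
    ring
  have htot : (∫ t in (-1 : ℝ)..1, (xi n z t) ^ 2 / (1 - t ^ 2)) =
      ∑ k ∈ Finset.range (n + 1), ∫ t in (z k)..(z (k + 1)), (xi n z t) ^ 2 / (1 - t ^ 2) := by
    rw [sum_integral_adjacent_intervals (fun k hk => (hmain k (by omega)).1), h0, h1]
  rw [htot, Finset.sum_congr rfl fun k hk =>
      (hmain k (by rw [Finset.mem_range] at hk; omega)).2, Finset.sum_add_distrib,
    Finset.sum_add_distrib, Finset.sum_neg_distrib, hc]
  -- `A_n = 0` removes the last term of the first sum, `B_0 = 0` the first term of the second.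
  rw [Finset.sum_range_succ _ n, hAn,
    Finset.sum_range_succ' (fun k => (xi n z (z k) + ((-1 : ℝ) ^ k + m) * (1 + z k)) ^ 2 / 2 *
      Real.log ((1 + z (k + 1)) / (1 + z k))) n, hB0,
    Finset.range_eq_Ico, Finset.sum_Ico_add' (fun k => (xi n z (z k) +
      ((-1 : ℝ) ^ k + m) * (1 + z k)) ^ 2 / 2 * Real.log ((1 + z (k + 1)) / (1 + z k))) 0 n 1]
  rw [show Finset.Ico (0 + 1) (n + 1) = Finset.Icc 1 n by ext; simp]
  ring
end

section
/- For α ∈ (0,1) and γ > 0 define, for x ∈ (α,1), e(x;α,γ) := √(1−((α+x)/2)²) + √(1−((1+x)/2)²) + γ·[((α−x)/2)·f((α+x)/2) + ((x−1)/2)·f((x+1)/2)], where f(t) = (1−t)log(1−t) + (1+t)log(1+t) (extended continuously by f(±1) = 2 log 2), and let L(α,γ) := √(1−((1+α)/2)²) + γ·((α−1)/2)·f((α+1)/2), which equals lim_{x→1⁻} e(x;α,γ). Then for every α ∈ (0,1) there exists γ₀ > 0 such that for every γ ≥ γ₀ there exists x ∈ (α,1) with e(x;α,γ) < L(α,γ).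 -/
/-!
The `γ`-coefficient of `e(x;α,γ)` is, up to the factor `-1/2`, the midpoint rule for `∫_α^1 f` on the
subdivision `α < x < 1`, while that of `L(α,γ)` is the midpoint rule on the single interval `[α,1]`.
Since `f` is strictly convex (`fLog_midpoint_lt`), refining the subdivision strictly increases the
midpoint rule, so with `x = (1+α)/2` the `γ`-coefficient is smaller than that of `L` by some `d > 0`.
The square roots are bounded by `1`, hence `γ ≥ 3/d` suffices. The limit at the pole is continuity of
`e` in `x`, which follows from continuity of `t ↦ t log t`.
-/

/-- `f(t) = (1-t)log(1-t) + (1+t)log(1+t)`.  Since `Real.log 0 = 0` in Lean, this formula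
automatically realizes the continuous extension `f(±1) = 2 log 2`. -/
noncomputable def fLog (t : ℝ) : ℝ :=
  (1 - t) * Real.log (1 - t) + (1 + t) * Real.log (1 + t)

/-- The contribution `e(x;α,γ)` of the region between the roots `α` and `β = 1` of `ξ`
to the energy `E_γ` (up to an additive constant), with an interface pair of midpoint `x`:
perimeter term plus `γ` times the nonlocal term. -/
noncomputable def eNearPole (x α γ : ℝ) : ℝ :=
  Real.sqrt (1 - ((α + x) / 2) ^ 2) + Real.sqrt (1 - ((1 + x) / 2) ^ 2)
    + γ * (((α - x) / 2) * fLog ((α + x) / 2) + ((x - 1) / 2) * fLog ((x + 1) / 2))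

/-- `L(α,γ)`, the energy value of the configuration with no interfaces near the pole. -/
noncomputable def LNearPole (α γ : ℝ) : ℝ :=
  Real.sqrt (1 - ((1 + α) / 2) ^ 2) + γ * ((α - 1) / 2) * fLog ((α + 1) / 2)

theorem continuous_fLog : Continuous fLog := by
  have h := Real.continuous_mul_log
  have h1 : Continuous fun t : ℝ => (1 - t) * Real.log (1 - t) :=
    h.comp (continuous_const.sub continuous_id)
  have h2 : Continuous fun t : ℝ => (1 + t) * Real.log (1 + t) :=
    h.comp (continuous_const.add continuous_id)
  exact h1.add h2

/-- Strict midpoint convexity of `f` on `[-1,1]`. -/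
theorem fLog_midpoint_lt {a b : ℝ} (ha : a ∈ Set.Icc (-1 : ℝ) 1) (hb : b ∈ Set.Icc (-1 : ℝ) 1)
    (hab : a ≠ b) : 2 * fLog ((a + b) / 2) < fLog a + fLog b := by
  obtain ⟨ha1, ha2⟩ := ha
  obtain ⟨hb1, hb2⟩ := hb
  have key : ∀ u v : ℝ, 0 ≤ u → 0 ≤ v → u ≠ v →
      2 * ((u + v) / 2 * Real.log ((u + v) / 2)) < u * Real.log u + v * Real.log v := by
    intro u v hu hv huv
    have h := Real.strictConvexOn_mul_log.2 (Set.mem_Ici.2 hu) (Set.mem_Ici.2 hv) huv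
      (by norm_num : (0 : ℝ) < 1 / 2) (by norm_num : (0 : ℝ) < 1 / 2) (by norm_num)
    simp only [smul_eq_mul] at h
    rw [show 1 / 2 * u + 1 / 2 * v = (u + v) / 2 by ring] at h
    linarith
  have h1 := key (1 - a) (1 - b) (by linarith) (by linarith) (fun h => hab (by linarith))
  have h2 := key (1 + a) (1 + b) (by linarith) (by linarith) (fun h => hab (by linarith))
  rw [show (1 - a + (1 - b)) / 2 = 1 - (a + b) / 2 by ring] at h1
  rw [show (1 + a + (1 + b)) / 2 = 1 + (a + b) / 2 by ring] at h2
  unfold fLog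
  linarith

/-- Lemma on poles.  `L(α,γ) = lim_{x→1⁻} e(x;α,γ)`, and for every
`α ∈ (0,1)` there is `γ₀ > 0` such that for every `γ ≥ γ₀` some `x ∈ (α,1)` satisfies
`e(x;α,γ) < L(α,γ)`: when `γ` is large an interface pair strictly below the pole has
strictly smaller energy than the configuration with no interfaces near the pole. -/
theorem exists_energy_below_pole_limit :
    (∀ α ∈ Set.Ioo (0 : ℝ) 1, ∀ γ : ℝ,
      Filter.Tendsto (fun x => eNearPole x α γ) (nhdsWithin 1 (Set.Iio 1))
        (nhds (LNearPole α γ))) ∧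
    ∀ α ∈ Set.Ioo (0 : ℝ) 1, ∃ γ₀ > (0 : ℝ), ∀ γ ≥ γ₀,
      ∃ x ∈ Set.Ioo α 1, eNearPole x α γ < LNearPole α γ := by
  refine ⟨fun α _ γ => ?_, fun α hα => ?_⟩
  · have hc : Continuous fun x => eNearPole x α γ := by
      have hf := continuous_fLog
      unfold eNearPole
      fun_prop
    have hL : eNearPole 1 α γ = LNearPole α γ := by
      unfold eNearPole LNearPole
      norm_num [add_comm α 1]
      ring
    rw [← hL]
    exact (hc.tendsto 1).mono_left nhdsWithin_le_nhds
  · obtain ⟨h0, h1⟩ := hα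
    obtain ⟨x, hx⟩ : ∃ x, x = (1 + α) / 2 := ⟨_, rfl⟩
    have hm := fLog_midpoint_lt (a := (α + x) / 2) (b := (x + 1) / 2)
      ⟨by linarith, by linarith⟩ ⟨by linarith, by linarith⟩ (by intro h; linarith)
    rw [show ((α + x) / 2 + (x + 1) / 2) / 2 = (α + 1) / 2 by rw [hx]; ring] at hm
    obtain ⟨d, hd⟩ : ∃ d, d = (1 - α) / 4 *
      (fLog ((α + x) / 2) + fLog ((x + 1) / 2) - 2 * fLog ((α + 1) / 2)) := ⟨_, rfl⟩
    have hdpos : 0 < d := by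
      rw [hd]
      exact mul_pos (by linarith) (by linarith)
    refine ⟨3 / d, by positivity, fun γ hγ => ⟨x, ⟨by linarith, by linarith⟩, ?_⟩⟩
    have hγd : 3 ≤ γ * d := (div_le_iff₀ hdpos).1 hγ
    have hs : ∀ t : ℝ, Real.sqrt (1 - t ^ 2) ≤ 1 := fun t =>
      Real.sqrt_le_one.2 (by nlinarith [sq_nonneg t])
    have hs1 := hs ((α + x) / 2)
    have hs2 := hs ((1 + x) / 2)
    have hs3 := Real.sqrt_nonneg (1 - ((1 + α) / 2) ^ 2)
    have hdiff : γ * ((α - 1) / 2) * fLog ((α + 1) / 2) - γ * (((α - x) / 2) * fLog ((α + x) / 2)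
        + ((x - 1) / 2) * fLog ((x + 1) / 2)) = γ * d := by
      rw [hd, show (α - x) / 2 = (α - 1) / 4 by rw [hx]; ring,
        show (x - 1) / 2 = (α - 1) / 4 by rw [hx]; ring]
      ring
    unfold eNearPole LNearPole
    linarith
end

section
/- For n ≥ 1 let Z := {z ∈ ℝⁿ : 0 < z₁ < ⋯ < z_n < 1} and let M := {z ∈ ℝⁿ : Σ_{k=1}^{n} (−1)^{n−k} z_k = 1/2} (the affine subspace on which the symmetric pattern below has mass 0). For z ∈ Z let u_z : [−1,1] → ℝ be the axisymmetric pattern with 2n interfaces at −z_n < ⋯ < −z₁ < z₁ < ⋯ < z_n, equal to −1 on [−1,−z_n) and alternating between −1 and +1 across interfaces; set ξ_z(t) := ∫_{−1}^{t} u_z(s) ds and F_γ(z) := 2 Σ_{k=1}^{n} √(1−z_k²) + γ ∫_{−1}^{1} ξ_z(t)²/(1−t²) dt. Then for every n ≥ 1 there exists γ₀ > 0 such that for every γ ≥ γ₀ the function F_γ admits a local minimizer in M ∩ Z: there exist z* ∈ M ∩ Z and ε > 0 such that F_γ(z*) ≤ F_γ(z) for every z ∈ M ∩ Z with |z − z*|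 < ε. -/
/-!
The minimizer found is a global minimizer of the energy on `M ∩ Z`.

By symmetry everything is expressed on the half interval `x = |t| ∈ [0, 1]`: with
`Q(x) = ∫_x^1 q_z`, where `q_z` is a product of signs symmetric in the entries of `z`, the mass
constraint is `Q(0) = 0` and the nonlocal term is twice `H(z) = ∫_0^1 Q² / (1 - x²)`. Both make
sense on the whole cube `[0, 1]^n`, without any ordering, and are continuous there; hence `H`
attains its minimum over the compact set `admK n` of zero-mass configurations.

The main point is `exists_better`: a degenerate configuration (a coincidence, or an entry `0` or
`1`) never minimizes `H`. Coinciding interfaces, and an interface at the equator, are invisible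
up to a global sign, so they may be moved to the pole `x = 1` (`pair_to_pole`, `zero_to_pole`).
If an interface is available at the pole, slide the polar cap `(b, 1]`, `b` being the outermost
proper interface, towards the equator by a small `δ`: the interfaces `b, 1` become
`b - δ, 1 - δ`. This preserves the mass, and `Q²` decreases pointwise, strictly on `(b, 1 - δ)`
(`slide_cap`).

By compactness, `H` on degenerate configurations exceeds `min H` by a fixed gap. The perimeter
term lies in `[0, 2n]`, so for large `γ` a minimizer of the full energy over `admK n` is
nondegenerate; sorted increasingly, it lies in `M ∩ Z`.
-/


/-- The equatorially symmetric axisymmetric pattern `u_z` with `2n` interfaces located at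
`-z_{n-1} < ⋯ < -z_0 < z_0 < ⋯ < z_{n-1}` (indices `0,…,n-1` of `Fin n`), equal to `-1`
near the south pole and alternating between `-1` and `+1` across interfaces. -/
noncomputable def symPattern (n : ℕ) (z : EuclideanSpace ℝ (Fin n)) (t : ℝ) : ℝ :=
  (-1 : ℝ) ^ (((Finset.univ : Finset (Fin n)).filter (fun i => z i ≤ t)).card
      + ((Finset.univ : Finset (Fin n)).filter (fun i => -z i ≤ t)).card + 1)

/-- `ξ_z(t) = ∫_{-1}^t u_z(s) ds`. -/
noncomputable def symXi (n : ℕ) (z : EuclideanSpace ℝ (Fin n)) (t : ℝ) : ℝ :=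
  ∫ s in (-1 : ℝ)..t, symPattern n z s

/-- `F_γ(z) = 2 Σ_k √(1−z_k²) + γ ∫_{-1}^1 ξ_z(t)²/(1−t²) dt`, i.e. `(1/π) E_γ(u_z)`. -/
noncomputable def symEnergy (n : ℕ) (γ : ℝ) (z : EuclideanSpace ℝ (Fin n)) : ℝ :=
  2 * ∑ i, Real.sqrt (1 - z i ^ 2)
    + γ * ∫ t in (-1 : ℝ)..1, (symXi n z t) ^ 2 / (1 - t ^ 2)

/-- The open simplex `Z = {0 < z_1 < ⋯ < z_n < 1}`. -/
def simplexZ (n : ℕ) : Set (EuclideanSpace ℝ (Fin n)) :=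
  {z | StrictMono z ∧ ∀ i, z i ∈ Set.Ioo (0 : ℝ) 1}

/-- The mass-constraint affine subspace `M = {Σ_{k=1}^n (−1)^{n−k} z_k = 1/2}`
(indices shifted so that `z_k` of the paper is `z (k-1)` here). -/
def massM (n : ℕ) : Set (EuclideanSpace ℝ (Fin n)) :=
  {z | ∑ i : Fin n, (-1 : ℝ) ^ (n - 1 - (i : ℕ)) * z i = 1 / 2}

open MeasureTheory Set Filter Topology

/-! ### The pattern on the half interval -/

/-- Up to a global sign, the pattern in the variable `x = |t|`: the product of the signs which
are `-1` for `x ≤ z i` and `1` for `x > z i`. It is symmetric in the entries of `z`, which need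
not be ordered. -/
noncomputable def halfPat {n : ℕ} (z : Fin n → ℝ) (x : ℝ) : ℝ :=
  ∏ i, (if x ≤ z i then (-1 : ℝ) else 1)

/-- The primitive `∫_x^1` of `halfPat`; the total mass vanishes iff `halfQ z 0 = 0`. -/
noncomputable def halfQ {n : ℕ} (z : Fin n → ℝ) (x : ℝ) : ℝ :=
  ∫ s in x..1, halfPat z s

/-- Half of the nonlocal energy. -/
noncomputable def halfH {n : ℕ} (z : Fin n → ℝ) : ℝ :=
  ∫ x in (0 : ℝ)..1, (halfQ z x) ^ 2 / (1 - x ^ 2)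

/-- Admissible positions, unordered and possibly degenerate, with zero mass. -/
def admK (n : ℕ) : Set (Fin n → ℝ) := {z | z ∈ Icc (0 : Fin n → ℝ) 1 ∧ halfQ z 0 = 0}

/-- Nondegenerate positions: `n` distinct points in the open interval `(0, 1)`. -/
def Nondeg {n : ℕ} (z : Fin n → ℝ) : Prop :=
  (∀ i j, i ≠ j → z i ≠ z j) ∧ ∀ i, 0 < z i ∧ z i < 1

lemma sgn_mul_self (p : Prop) [Decidable p] :
    (if p then (-1 : ℝ) else 1) * (if p then (-1 : ℝ) else 1) = 1 := by
  split_ifs <;> norm_num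

lemma halfPat_mul_self {n : ℕ} (z : Fin n → ℝ) (x : ℝ) : halfPat z x * halfPat z x = 1 := by
  unfold halfPat
  rw [← Finset.prod_mul_distrib]
  exact Finset.prod_eq_one fun i _ => sgn_mul_self _

lemma abs_halfPat {n : ℕ} (z : Fin n → ℝ) (x : ℝ) : |halfPat z x| = 1 := by
  have h := halfPat_mul_self z x
  rw [← abs_mul_abs_self] at h
  nlinarith [abs_nonneg (halfPat z x)]

lemma measurable_halfPat {n : ℕ} (z : Fin n → ℝ) : Measurable (halfPat z) := by
  unfold halfPat
  refine Finset.measurable_prod _ fun i _ => ?_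
  exact Measurable.ite measurableSet_Iic measurable_const measurable_const

lemma halfPat_intervalIntegrable {n : ℕ} (z : Fin n → ℝ) (a b : ℝ) :
    IntervalIntegrable (halfPat z) volume a b := by
  refine (intervalIntegrable_const (c := (1 : ℝ))).mono_fun
    (measurable_halfPat z).aestronglyMeasurable ?_
  exact Eventually.of_forall fun x => by simp [abs_halfPat]

lemma halfQ_continuous {n : ℕ} (z : Fin n → ℝ) : Continuous (halfQ z) := by
  have h := intervalIntegral.continuous_primitive (halfPat_intervalIntegrable z) 1
  have : halfQ z = fun x => -∫ s in (1 : ℝ)..x, halfPat z s := by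
    funext x; exact intervalIntegral.integral_symm _ _
  rw [this]; exact h.neg

lemma abs_halfQ_le {n : ℕ} (z : Fin n → ℝ) {x : ℝ} (hx : x ≤ 1) : |halfQ z x| ≤ 1 - x := by
  have := intervalIntegral.norm_integral_le_of_norm_le_const (a := x) (b := 1) (C := 1)
    (f := halfPat z) (fun s _ => by simp [abs_halfPat])
  rw [abs_of_nonneg (by linarith : (0 : ℝ) ≤ 1 - x)] at this
  simpa [halfQ] using this

lemma integrand_bound {n : ℕ} (z : Fin n → ℝ) {x : ℝ} (hx : x ∈ Ioc (0 : ℝ) 1) :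
    ‖(halfQ z x) ^ 2 / (1 - x ^ 2)‖ ≤ 1 := by
  have h1 := abs_halfQ_le z hx.2
  have h2 : (0 : ℝ) ≤ 1 - x ^ 2 := by nlinarith [hx.1, hx.2]
  rw [Real.norm_of_nonneg (div_nonneg (sq_nonneg _) h2)]
  apply div_le_one_of_le₀ _ h2
  rw [← sq_abs]
  nlinarith [hx.1, hx.2, abs_nonneg (halfQ z x)]

lemma integrand_measurable {n : ℕ} (z : Fin n → ℝ) :
    Measurable fun x => (halfQ z x) ^ 2 / (1 - x ^ 2) := by
  have := (halfQ_continuous z).measurable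
  fun_prop

lemma integrand_intervalIntegrable {n : ℕ} (z : Fin n → ℝ) :
    IntervalIntegrable (fun x => (halfQ z x) ^ 2 / (1 - x ^ 2)) volume 0 1 := by
  refine (intervalIntegrable_const (c := (1 : ℝ))).mono_fun
    (integrand_measurable z).aestronglyMeasurable ?_
  refine (ae_restrict_iff' measurableSet_uIoc).2 (Eventually.of_forall fun x hx => ?_)
  rw [uIoc_of_le zero_le_one] at hx
  simpa using integrand_bound z hx

/-! ### Continuity in the positions and compactness -/

lemma halfQ_continuous_left {n : ℕ} (x : ℝ) :
    Continuous fun z : Fin n → ℝ => halfQ z x := by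
  rw [continuous_iff_continuousAt]
  intro w
  unfold halfQ
  refine intervalIntegral.continuousAt_of_dominated_interval (bound := fun _ => 1)
    (Eventually.of_forall fun z => (measurable_halfPat z).aestronglyMeasurable)
    (Eventually.of_forall fun z => Eventually.of_forall fun s _ => by simp [abs_halfPat])
    intervalIntegrable_const ?_
  -- The pattern at `s` is locally constant in `z` near `w` unless `s` is one of the `w i`.
  have hfin : (Set.range w).Finite := Set.finite_range w
  filter_upwards [hfin.countable.ae_notMem volume] with s hs _
  have hloc : ∀ᶠ z in 𝓝 w, ∀ i : Fin n, (s ≤ z i ↔ s ≤ w i) := by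
    rw [eventually_all]
    intro i
    have hi : s ≠ w i := fun h => hs ⟨i, h.symm⟩
    have hc : Tendsto (fun z : Fin n → ℝ => z i) (𝓝 w) (𝓝 (w i)) :=
      (continuous_apply i).continuousAt
    rcases lt_or_gt_of_ne hi with h | h
    · filter_upwards [hc.eventually (lt_mem_nhds h)] with z hz
      exact ⟨fun _ => h.le, fun _ => hz.le⟩
    · filter_upwards [hc.eventually (gt_mem_nhds h)] with z hz
      exact ⟨fun h' => absurd hz (not_lt.2 h'), fun h' => absurd h (not_lt.2 h')⟩
  refine (continuousAt_const (y := halfPat w s)).congr ?_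
  filter_upwards [hloc] with z hz
  simp only [halfPat, hz]

lemma halfH_continuous {n : ℕ} : Continuous (halfH : (Fin n → ℝ) → ℝ) := by
  unfold halfH
  refine intervalIntegral.continuous_of_dominated_interval (bound := fun _ => 1)
    (fun z => (integrand_measurable z).aestronglyMeasurable) ?_ intervalIntegrable_const ?_
  · intro z
    refine Eventually.of_forall fun x hx => ?_
    rw [uIoc_of_le zero_le_one] at hx
    exact integrand_bound z hx
  · exact Eventually.of_forall fun x _ => ((halfQ_continuous_left x).pow 2).div_const _

lemma isCompact_admK (n : ℕ) : IsCompact (admK n) :=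
  isCompact_Icc.inter_right (isClosed_eq (halfQ_continuous_left 0) continuous_const)

lemma isOpen_nondeg (n : ℕ) : IsOpen {z : Fin n → ℝ | Nondeg z} := by
  have h1 : {z : Fin n → ℝ | Nondeg z} =
      (⋂ i, ⋂ j, {z : Fin n → ℝ | i ≠ j → z i ≠ z j}) ∩
        ⋂ i, ({z : Fin n → ℝ | 0 < z i} ∩ {z : Fin n → ℝ | z i < 1}) := by
    ext z; simp [Nondeg]
  rw [h1]
  refine (isOpen_iInter_of_finite fun i => isOpen_iInter_of_finite fun j => ?_).inter
    (isOpen_iInter_of_finite fun i =>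
      (isOpen_lt continuous_const (continuous_apply i)).inter
        (isOpen_lt (continuous_apply i) continuous_const))
  by_cases hij : i = j
  · simp [hij]
  · simpa [hij] using (isOpen_ne_fun (continuous_apply i) (continuous_apply j) :
      IsOpen {z : Fin n → ℝ | z i ≠ z j})

/-! ### Moving interfaces -/

lemma integral_eq_of_const {f : ℝ → ℝ} {a b c : ℝ} (hab : a ≤ b)
    (h : ∀ x ∈ Ioc a b, f x = c) : ∫ x in a..b, f x = c * (b - a) := by
  rw [intervalIntegral.integral_congr_ae (g := fun _ => c)]
  · simp [mul_comm]
  · refine Eventually.of_forall fun x hx => h x ?_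
    rwa [uIoc_of_le hab] at hx

lemma halfQ_split {n : ℕ} (z : Fin n → ℝ) (x y : ℝ) :
    halfQ z x = (∫ s in x..y, halfPat z s) + halfQ z y :=
  (intervalIntegral.integral_add_adjacent_intervals
    (halfPat_intervalIntegrable z _ _) (halfPat_intervalIntegrable z _ _)).symm

/-- Changing the pattern by a global sign on `(0, 1]` affects neither mass nor energy. -/
lemma sign_invariance {n : ℕ} {z w : Fin n → ℝ} {c : ℝ} (hc : c * c = 1)
    (h : ∀ x ∈ Ioc (0 : ℝ) 1, halfPat w x * halfPat z x = c) :
    halfQ w 0 = c * halfQ z 0 ∧ halfH w = halfH z := by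
  have hp : ∀ x ∈ Ioc (0 : ℝ) 1, halfPat w x = c * halfPat z x := fun x hx => by
    rw [← h x hx, mul_assoc, halfPat_mul_self, mul_one]
  have hQ : ∀ x ∈ Icc (0 : ℝ) 1, halfQ w x = c * halfQ z x := by
    intro x hx
    unfold halfQ
    rw [← intervalIntegral.integral_const_mul]
    refine intervalIntegral.integral_congr_ae (Eventually.of_forall fun s hs => ?_)
    rw [uIoc_of_le hx.2] at hs
    exact hp s ⟨hx.1.trans_lt hs.1, hs.2⟩
  refine ⟨hQ 0 (by simp), ?_⟩
  unfold halfH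
  refine intervalIntegral.integral_congr fun x hx => ?_
  rw [uIcc_of_le zero_le_one] at hx
  simp only [hQ x hx]
  rw [mul_pow, sq c, hc, one_mul]

/-- Two interfaces at the same place cancel, so both may be moved to the pole. -/
lemma pair_to_pole {n : ℕ} {z : Fin n → ℝ} {i j : Fin n} (hij : i ≠ j) (h : z i = z j) :
    halfQ (Function.update (Function.update z i 1) j 1) 0 = halfQ z 0 ∧
      halfH (Function.update (Function.update z i 1) j 1) = halfH z := by
  have key := sign_invariance (z := z) (w := Function.update (Function.update z i 1) j 1)
    (c := 1) (by norm_num) ?_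
  · simpa using key
  intro x hx
  unfold halfPat
  rw [← Finset.prod_mul_distrib, Finset.prod_eq_mul i j hij]
  · simp [hij, hx.2, h]
    split_ifs <;> simp
  · rintro k - ⟨hki, hkj⟩
    simp only [Function.update_of_ne hki, Function.update_of_ne hkj]
    exact sgn_mul_self _
  · simp
  · simp

/-- A double interface at the equator cancels, so it may be moved to the poles, at the price of
a global sign. -/
lemma zero_to_pole {n : ℕ} {z : Fin n → ℝ} {i : Fin n} (h : z i = 0) :
    halfQ (Function.update z i 1) 0 = - halfQ z 0 ∧
      halfH (Function.update z i 1) = halfH z := by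
  have key := sign_invariance (z := z) (w := Function.update z i 1) (c := -1) (by norm_num) ?_
  · simpa using key
  intro x hx
  unfold halfPat
  rw [← Finset.prod_mul_distrib, Finset.prod_eq_single i]
  · simp [hx.2, h, not_le.2 hx.1]
  · rintro k - hki
    simp only [Function.update_of_ne hki]
    exact sgn_mul_self _
  · simp

/-- If an interface `j` is unused (sits at the pole), sliding the polar cap bounded by the
outermost proper interface `m` towards the equator by a small `δ` keeps the mass, decreases
`|halfQ|` pointwise, and strictly decreases the energy. -/
lemma slide_cap {n : ℕ} {z : Fin n → ℝ} {m j : Fin n} {δ : ℝ} (hmj : m ≠ j)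
    (hj : z j = 1) (hδ : 0 < δ) (hδb : δ ≤ z m) (hδ1 : δ < 1 - z m)
    (hoth : ∀ k, k ≠ m → z k = 1 ∨ z k ≤ z m - δ) :
    halfQ (Function.update (Function.update z m (z m - δ)) j (1 - δ)) 0 = halfQ z 0 ∧
      halfH (Function.update (Function.update z m (z m - δ)) j (1 - δ)) < halfH z := by
  set w := Function.update (Function.update z m (z m - δ)) j (1 - δ) with hw
  set b := z m with hb
  have hprod : ∀ x, halfPat w x * halfPat z x =
      ((if x ≤ b - δ then (-1 : ℝ) else 1) * (if x ≤ b then (-1 : ℝ) else 1)) *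
      ((if x ≤ 1 - δ then (-1 : ℝ) else 1) * (if x ≤ 1 then (-1 : ℝ) else 1)) := by
    intro x
    unfold halfPat
    rw [← Finset.prod_mul_distrib, Finset.prod_eq_mul m j hmj]
    · simp [hw, hmj, hj, hb]
    · rintro k - ⟨hki, hkj⟩
      simp only [hw, Function.update_of_ne hki, Function.update_of_ne hkj]
      exact sgn_mul_self _
    · simp
    · simp
  have hrel : ∀ x c, halfPat w x * halfPat z x = c → halfPat w x = c * halfPat z x := by
    intro x c h
    rw [← h, mul_assoc, halfPat_mul_self, mul_one]
  -- `e` is the value of the pattern `z` on the polar cap `(b, 1]`.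
  set e := halfPat z 1 with he
  have hee : e * e = 1 := halfPat_mul_self z 1
  have hz1 : ∀ x ∈ Ioc b 1, halfPat z x = e := by
    intro x hx
    rw [he]
    unfold halfPat
    refine Finset.prod_congr rfl fun k _ => ?_
    by_cases hk : k = m
    · subst hk
      rw [if_neg (not_le.2 hx.1), if_neg (not_le.2 (by linarith))]
    · rcases hoth k hk with h | h
      · rw [if_pos (by rw [h]; exact hx.2), if_pos h.ge]
      · rw [if_neg (by linarith [hx.1]), if_neg (by linarith)]
  have hz2 : ∀ x ∈ Ioc (b - δ) b, halfPat z x = -e := by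
    intro x hx
    have h1 : halfPat z x * halfPat z 1 = -1 := by
      unfold halfPat
      rw [← Finset.prod_mul_distrib, Finset.prod_eq_single m]
      · rw [if_pos hx.2, if_neg (not_le.2 (by linarith))]; norm_num
      · rintro k - hk
        rcases hoth k hk with h | h
        · rw [if_pos (by rw [h]; linarith [hx.2]), if_pos h.ge]; norm_num
        · rw [if_neg (by linarith [hx.1]), if_neg (by linarith)]; norm_num
      · simp
    calc halfPat z x = halfPat z x * (e * e) := by rw [hee, mul_one]
      _ = (halfPat z x * halfPat z 1) * e := by rw [he]; ring
      _ = -e := by rw [h1]; ring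
  have hw1 : ∀ x ∈ Ioc (1 - δ) 1, halfPat w x = -e := by
    intro x hx
    rw [hrel x (-1), hz1 x ⟨by linarith [hx.1], hx.2⟩]; · ring
    rw [hprod, if_neg (by linarith [hx.1]), if_neg (by linarith [hx.1]),
      if_neg (by linarith [hx.1]), if_pos hx.2]; norm_num
  have hw2 : ∀ x ∈ Ioc (b - δ) (1 - δ), halfPat w x = e := by
    intro x hx
    by_cases hxb : x ≤ b
    · rw [hrel x (-1), hz2 x ⟨hx.1, hxb⟩]; · ring
      rw [hprod, if_neg (by linarith [hx.1]), if_pos hxb, if_pos hx.2,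
        if_pos (by linarith [hx.2])]; norm_num
    · rw [hrel x 1, hz1 x ⟨not_le.1 hxb, by linarith [hx.2]⟩]; · ring
      rw [hprod, if_neg (by linarith [hx.1]), if_neg hxb, if_pos hx.2,
        if_pos (by linarith [hx.2])]; norm_num
  have hw3 : ∀ x, x ≤ b - δ → halfPat w x = halfPat z x := by
    intro x hx
    rw [hrel x 1, one_mul]
    rw [hprod, if_pos hx, if_pos (by linarith), if_pos (by linarith), if_pos (by linarith)]
    norm_num
  -- The resulting primitives.
  have Qz1 : ∀ x ∈ Icc b 1, halfQ z x = e * (1 - x) := by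
    intro x hx
    exact integral_eq_of_const hx.2 fun s hs => hz1 s ⟨hx.1.trans_lt hs.1, hs.2⟩
  have Qz2 : ∀ x ∈ Icc (b - δ) b, halfQ z x = -e * (b - x) + e * (1 - b) := by
    intro x hx
    rw [halfQ_split z x b, Qz1 b ⟨le_rfl, by linarith⟩,
      integral_eq_of_const hx.2 fun s hs => hz2 s ⟨hx.1.trans_lt hs.1, hs.2⟩]
  have Qw1 : ∀ x ∈ Icc (1 - δ) 1, halfQ w x = -e * (1 - x) := by
    intro x hx
    exact integral_eq_of_const hx.2 fun s hs => hw1 s ⟨hx.1.trans_lt hs.1, hs.2⟩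
  have Qw2 : ∀ x ∈ Icc (b - δ) (1 - δ), halfQ w x = e * (1 - 2 * δ - x) := by
    intro x hx
    rw [halfQ_split w x (1 - δ), Qw1 (1 - δ) ⟨le_rfl, by linarith⟩,
      integral_eq_of_const hx.2 fun s hs => hw2 s ⟨hx.1.trans_lt hs.1, hs.2⟩]
    ring
  have Q3 : ∀ x, x ≤ b - δ → halfQ w x = halfQ z x := by
    intro x hx
    rw [halfQ_split w x (b - δ), halfQ_split z x (b - δ), Qw2 (b - δ) ⟨le_rfl, by linarith⟩,
      Qz2 (b - δ) ⟨le_rfl, by linarith⟩,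
      intervalIntegral.integral_congr_ae (g := halfPat z)]
    · ring
    · refine Eventually.of_forall fun s hs => hw3 s ?_
      rw [uIoc_of_le hx] at hs
      exact hs.2
  have hstrict : ∀ x ∈ Ioo b (1 - δ), halfQ w x ^ 2 < halfQ z x ^ 2 := by
    intro x hx
    rw [Qw2 x ⟨by linarith [hx.1], hx.2.le⟩, Qz1 x ⟨hx.1.le, by linarith [hx.2]⟩,
      mul_pow, mul_pow, sq e, hee]
    nlinarith [hx.1, hx.2]
  have hle : ∀ x ∈ Icc (0 : ℝ) 1, halfQ w x ^ 2 ≤ halfQ z x ^ 2 := by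
    intro x hx
    rcases le_total x (b - δ) with h1 | h1
    · rw [Q3 x h1]
    rcases le_total x b with h2 | h2
    · rw [Qw2 x ⟨h1, by linarith⟩, Qz2 x ⟨h1, h2⟩,
        show -e * (b - x) + e * (1 - b) = e * (1 - 2 * b + x) by ring,
        mul_pow, mul_pow, sq e, hee]
      nlinarith [mul_nonneg (sub_nonneg.2 h1) (sub_nonneg.2 hδ1.le)]
    rcases le_total x (1 - δ) with h3 | h3
    · rw [Qw2 x ⟨h1, h3⟩, Qz1 x ⟨h2, hx.2⟩, mul_pow, mul_pow, sq e, hee]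
      nlinarith
    · rw [Qw1 x ⟨h3, hx.2⟩, Qz1 x ⟨h2, hx.2⟩]
      exact le_of_eq (by ring)
  refine ⟨Q3 0 (by linarith), ?_⟩
  unfold halfH
  refine intervalIntegral.integral_lt_integral_of_ae_le_of_measure_setOfPred_lt_ne_zero
    zero_le_one (integrand_intervalIntegrable w) (integrand_intervalIntegrable z) ?_ ?_
  · refine (ae_restrict_iff' measurableSet_Ioc).2 (Eventually.of_forall fun x hx => ?_)
    have : (0 : ℝ) ≤ 1 - x ^ 2 := by nlinarith [hx.1, hx.2]
    exact div_le_div_of_nonneg_right (hle x ⟨hx.1.le, hx.2⟩) this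
  · have hsub : Ioo b (1 - δ) ⊆ {x | halfQ w x ^ 2 / (1 - x ^ 2) < halfQ z x ^ 2 / (1 - x ^ 2)} := by
      intro x hx
      have : (0 : ℝ) < 1 - x ^ 2 := by nlinarith [hx.1, hx.2]
      exact div_lt_div_of_pos_right (hstrict x hx) this
    have hsub' : Ioo b (1 - δ) ⊆ Ioc 0 1 := fun x hx => ⟨by linarith [hx.1], by linarith [hx.2]⟩
    refine ne_of_gt (lt_of_lt_of_le ?_ (measure_mono hsub))
    rw [Measure.restrict_apply measurableSet_Ioo, inter_eq_left.2 hsub', Real.volume_Ioo]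
    exact ENNReal.ofReal_pos.2 (by linarith)

/-- A degenerate admissible configuration is not a minimizer of the nonlocal energy. -/
lemma exists_better {n : ℕ} (N : ℕ) : ∀ z : Fin n → ℝ, z ∈ admK n → ¬ Nondeg z →
    (Finset.univ.filter fun i => z i ≠ 1).card = N → ∃ w ∈ admK n, halfH w < halfH z := by
  induction N using Nat.strong_induction_on with
  | _ N ih =>
  intro z hz hdeg hcard
  obtain ⟨⟨hz0, hz1⟩, hzQ⟩ := hz
  have hz0 : ∀ i, 0 ≤ z i := hz0
  have hz1 : ∀ i, z i ≤ 1 := hz1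
  -- Degenerate interfaces below the pole are first moved to the pole.
  have move : ∀ (w : Fin n → ℝ) (i : Fin n), z i ≠ 1 → (∀ k, w k = z k ∨ w k = 1) → w i = 1 →
      halfQ w 0 = 0 → halfH w = halfH z → ∃ w ∈ admK n, halfH w < halfH z := by
    intro w i hi hwk hwi hwQ hwH
    have hlt : (Finset.univ.filter fun k => w k ≠ 1).card < N := by
      rw [← hcard]
      refine Finset.card_lt_card (Finset.ssubset_iff_of_subset ?_ |>.2 ⟨i, by simp [hi], by simp [hwi]⟩)
      intro k
      simp only [Finset.mem_filter, Finset.mem_univ, true_and]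
      intro hk
      rcases hwk k with h | h
      · rwa [← h]
      · exact absurd h hk
    rw [← hwH]
    refine ih _ hlt w ⟨⟨fun k => ?_, fun k => ?_⟩, hwQ⟩ ?_ rfl
    · rcases hwk k with h | h <;> simp [h, hz0]
    · rcases hwk k with h | h <;> simp [h, hz1]
    · intro hnd
      exact absurd hwi (hnd.2 i).2.ne
  by_cases hA : ∃ i j, i ≠ j ∧ z i = z j ∧ z i ≠ 1
  · obtain ⟨i, j, hij, h, hi⟩ := hA
    obtain ⟨h1, h2⟩ := pair_to_pole hij h
    refine move _ i hi (fun k => ?_) (by simp [hij]) (h1.trans hzQ) h2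
    by_cases hkj : k = j
    · right; simp [hkj]
    by_cases hki : k = i
    · right; subst hki; simp [hkj]
    · left; simp [hkj, hki]
  by_cases hB : ∃ i, z i = 0
  · obtain ⟨i, h⟩ := hB
    obtain ⟨h1, h2⟩ := zero_to_pole h
    refine move _ i (by simp [h]) (fun k => ?_) (by simp) (by rw [h1, hzQ, neg_zero]) h2
    by_cases hki : k = i
    · right; simp [hki]
    · left; simp [hki]
  push Not at hA hB
  have hpole : ∃ j, z j = 1 := by
    by_contra! hno
    exact hdeg ⟨fun i j hij h => hno i (hA i j hij h),
      fun i => ⟨lt_of_le_of_ne (hz0 i) (hB i).symm, lt_of_le_of_ne (hz1 i) (hno i)⟩⟩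
  obtain ⟨j, hj⟩ := hpole
  have hproper : (Finset.univ.filter fun i => z i ≠ 1).Nonempty := by
    by_contra hno
    have hall : ∀ i, z i = 1 := by
      intro i
      by_contra hi
      exact hno ⟨i, by simp [hi]⟩
    have : halfQ z 0 = halfPat z 1 * (1 - 0) := by
      refine integral_eq_of_const zero_le_one fun x hx => ?_
      simp [halfPat, hall, hx.2]
    rw [hzQ] at this
    have h2 := abs_halfPat z 1
    rw [show halfPat z 1 = 0 by linarith] at h2
    simp at h2
  obtain ⟨m, hm, hmax⟩ := Finset.exists_max_image _ z hproper
  simp only [Finset.mem_filter, Finset.mem_univ, true_and] at hm hmax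
  have hm1 : z m < 1 := lt_of_le_of_ne (hz1 m) hm
  have hm0 : 0 < z m := lt_of_le_of_ne (hz0 m) (hB m).symm
  have hsmall : ∀ c : ℝ, 0 < c → ∀ᶠ δ in 𝓝[>] (0 : ℝ), δ < c := fun c hc =>
    nhdsWithin_le_nhds (gt_mem_nhds hc)
  have hev : ∀ᶠ δ in 𝓝[>] (0 : ℝ), ∀ k, k ≠ m → z k = 1 ∨ z k ≤ z m - δ := by
    rw [eventually_all]
    intro k
    by_cases hk : k = m
    · simp [hk]
    by_cases hk1 : z k = 1
    · simp [hk1]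
    have hlt : z k < z m := lt_of_le_of_ne (hmax k hk1) fun h => hk1 (hA k m hk h)
    filter_upwards [hsmall (z m - z k) (by linarith)] with δ hδ _
    right; linarith
  obtain ⟨δ, hoth, hδm, hδ1, hδ⟩ := (hev.and ((hsmall _ hm0).and
    ((hsmall (1 - z m) (by linarith)).and self_mem_nhdsWithin))).exists
  have hδ : 0 < δ := hδ
  have hmj : m ≠ j := fun h => hm (h ▸ hj)
  obtain ⟨h1, h2⟩ := slide_cap hmj hj hδ hδm.le hδ1 hoth
  refine ⟨_, ⟨⟨fun k => ?_, fun k => ?_⟩, h1.trans hzQ⟩, h2⟩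
  · simp only [Function.update_apply, Pi.zero_apply]
    split_ifs
    · linarith
    · linarith
    · exact hz0 k
  · simp only [Function.update_apply, Pi.one_apply]
    split_ifs
    · linarith
    · linarith
    · exact hz1 k

/-! ### Relation with the energy on the sphere -/

lemma symPattern_eq {n : ℕ} {z : Fin n → ℝ} (hz : ∀ i, 0 ≤ z i) {t : ℝ} (ht : t ≠ 0)
    (htz : ∀ i, t ≠ z i) : symPattern n (WithLp.toLp 2 z) t = - halfPat z |t| := by
  unfold symPattern
  rw [pow_succ, pow_add, Finset.card_filter, Finset.card_filter,
    ← Finset.prod_pow_eq_pow_sum, ← Finset.prod_pow_eq_pow_sum, ← Finset.prod_mul_distrib,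
    mul_neg_one]
  congr 1
  refine Finset.prod_congr rfl fun i _ => ?_
  simp only
  have h0 := hz i
  rcases lt_or_gt_of_ne ht with h | h
  · rw [abs_of_neg h, if_neg (by linarith : ¬ z i ≤ t)]
    by_cases h2 : -z i ≤ t
    · rw [if_pos h2, if_pos (by linarith)]; norm_num
    · rw [if_neg h2, if_neg (fun h3 => h2 (by linarith))]; norm_num
  · rw [abs_of_pos h, if_pos (by linarith : -z i ≤ t)]
    rcases lt_or_gt_of_ne (htz i) with h2 | h2
    · rw [if_neg (by linarith), if_pos h2.le]; norm_num
    · rw [if_pos h2.le, if_neg (by linarith)]; norm_num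

lemma symPattern_ae {n : ℕ} {z : Fin n → ℝ} (hz : ∀ i, 0 ≤ z i) :
    ∀ᵐ t, symPattern n (WithLp.toLp 2 z) t = - halfPat z |t| := by
  filter_upwards [((Set.finite_range z).insert 0).countable.ae_notMem volume] with t ht
  exact symPattern_eq hz (fun h => ht (by simp [h])) fun i h => ht (by simp [h])

lemma symXi_eq {n : ℕ} {z : Fin n → ℝ} (hz : ∀ i, 0 ≤ z i) (t : ℝ) :
    symXi n (WithLp.toLp 2 z) t = ∫ s in (-1 : ℝ)..t, - halfPat z |s| := by
  unfold symXi
  exact intervalIntegral.integral_congr_ae ((symPattern_ae hz).mono fun s h _ => h)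

lemma halfPat_abs_intervalIntegrable {n : ℕ} (z : Fin n → ℝ) (a b : ℝ) :
    IntervalIntegrable (fun s => - halfPat z |s|) volume a b := by
  refine (intervalIntegrable_const (c := (1 : ℝ))).mono_fun
    ((measurable_halfPat z).comp measurable_norm).neg.aestronglyMeasurable ?_
  exact Eventually.of_forall fun x => by simp [abs_halfPat]

lemma symXi_neg {n : ℕ} {z : Fin n → ℝ} (hz : ∀ i, 0 ≤ z i) {x : ℝ} (hx : x ∈ Icc (0 : ℝ) 1) :
    symXi n (WithLp.toLp 2 z) (-x) = - halfQ z x := by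
  rw [symXi_eq hz]
  have h1 : ∫ s in (-1 : ℝ)..(-x), - halfPat z |s| = ∫ s in x..1, - halfPat z |s| := by
    have := intervalIntegral.integral_comp_neg (a := x) (b := 1) (fun s => - halfPat z |s|)
    simp only [abs_neg] at this
    exact this.symm
  rw [h1, intervalIntegral.integral_neg]
  congr 1
  refine intervalIntegral.integral_congr fun s hs => ?_
  rw [uIcc_of_le hx.2] at hs
  simp only [abs_of_nonneg (hx.1.trans hs.1)]

lemma symXi_pos {n : ℕ} {z : Fin n → ℝ} (hz : ∀ i, 0 ≤ z i) (hQ : halfQ z 0 = 0) {x : ℝ}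
    (hx : x ∈ Icc (0 : ℝ) 1) : symXi n (WithLp.toLp 2 z) x = halfQ z x := by
  have h0 := symXi_neg hz (x := 0) (by simp)
  rw [symXi_eq hz] at h0
  rw [symXi_eq hz, ← intervalIntegral.integral_add_adjacent_intervals
    (halfPat_abs_intervalIntegrable z (-1) 0) (halfPat_abs_intervalIntegrable z 0 x)]
  rw [neg_zero] at h0
  rw [h0, hQ, intervalIntegral.integral_neg]
  have h1 : ∫ s in (0 : ℝ)..x, halfPat z |s| = ∫ s in (0 : ℝ)..x, halfPat z s := by
    refine intervalIntegral.integral_congr fun s hs => ?_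
    rw [uIcc_of_le hx.1] at hs
    simp only [abs_of_nonneg hs.1]
  have h2 := halfQ_split z 0 x
  rw [h1]
  linarith

lemma symEnergy_eq {n : ℕ} {z : Fin n → ℝ} (hz : z ∈ admK n) (γ : ℝ) :
    symEnergy n γ (WithLp.toLp 2 z) =
      2 * ∑ i, Real.sqrt (1 - z i ^ 2) + γ * (2 * halfH z) := by
  have hz0 : ∀ i, 0 ≤ z i := hz.1.1
  unfold symEnergy
  set f : ℝ → ℝ := fun t => symXi n (WithLp.toLp 2 z) t ^ 2 / (1 - t ^ 2) with hf
  have hpos : EqOn f (fun x => (halfQ z x) ^ 2 / (1 - x ^ 2)) (uIcc 0 1) := by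
    intro x hx
    rw [uIcc_of_le zero_le_one] at hx
    simp only [hf, symXi_pos hz0 hz.2 hx]
  have hneg : EqOn (fun x => f (-x)) (fun x => (halfQ z x) ^ 2 / (1 - x ^ 2)) (uIcc 0 1) := by
    intro x hx
    rw [uIcc_of_le zero_le_one] at hx
    simp only [hf, symXi_neg hz0 hx, neg_sq]
  have i1 : ∫ t in (0 : ℝ)..1, f t = halfH z := intervalIntegral.integral_congr hpos
  have i2 : ∫ t in (-1 : ℝ)..0, f t = halfH z := by
    have := intervalIntegral.integral_comp_neg (a := 0) (b := 1) f
    rw [neg_zero] at this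
    rw [← this]
    exact intervalIntegral.integral_congr hneg
  have I1 : IntervalIntegrable f volume 0 1 :=
    (integrand_intervalIntegrable z).congr (hpos.symm.mono uIoc_subset_uIcc)
  have I2 : IntervalIntegrable f volume (-1) 0 := by
    have h : IntervalIntegrable (fun x => f (-x)) volume 0 1 :=
      (integrand_intervalIntegrable z).congr (hneg.symm.mono uIoc_subset_uIcc)
    have := (IntervalIntegrable.iff_comp_neg (f := f) (a := 0) (b := -1)).2 (by simpa using h)
    exact this.symm
  have : ∫ t in (-1 : ℝ)..1, f t = 2 * halfH z := by
    rw [← intervalIntegral.integral_add_adjacent_intervals I2 I1, i1, i2]; ring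
  rw [this]

/-- For an ordered configuration the product of signs telescopes into an alternating sum. -/
lemma prod_eq_alternating {n : ℕ} {z : Fin n → ℝ} (hz : Monotone z) (x : ℝ) :
    halfPat z x =
      1 - 2 * ∑ i : Fin n, (-1 : ℝ) ^ (n - 1 - (i : ℕ)) * (if x ≤ z i then (1 : ℝ) else 0) := by
  unfold halfPat
  induction n with
  | zero => simp
  | succ n ih =>
    have hm : Monotone fun i : Fin n => z i.castSucc :=
      fun i j hij => hz (Fin.castSucc_le_castSucc_iff.2 hij)
    have ih := ih hm
    rw [Fin.prod_univ_castSucc, Fin.sum_univ_castSucc, ih]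
    have hs : ∑ i : Fin n, (-1 : ℝ) ^ (n + 1 - 1 - (i.castSucc : ℕ)) *
        (if x ≤ z i.castSucc then (1 : ℝ) else 0) =
        - ∑ i : Fin n, (-1 : ℝ) ^ (n - 1 - (i : ℕ)) *
          (if x ≤ z i.castSucc then (1 : ℝ) else 0) := by
      rw [← Finset.sum_neg_distrib]
      refine Finset.sum_congr rfl fun i _ => ?_
      have : n + 1 - 1 - (i.castSucc : ℕ) = (n - 1 - (i : ℕ)) + 1 := by
        have := i.2
        simp only [Fin.val_castSucc]
        omega
      rw [this, pow_succ]; ring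
    rw [hs]
    by_cases hl : x ≤ z (Fin.last n)
    · simp [hl]; ring
    · have hzero : ∀ i : Fin n, ¬ x ≤ z i.castSucc := fun i h =>
        hl (h.trans (hz (Fin.le_last _)))
      simp [hl, hzero]

lemma halfQ_zero_eq {n : ℕ} {z : Fin n → ℝ} (hz : Monotone z) (h01 : ∀ i, z i ∈ Icc (0 : ℝ) 1) :
    halfQ z 0 = 1 - 2 * ∑ i : Fin n, (-1 : ℝ) ^ (n - 1 - (i : ℕ)) * z i := by
  have hi : ∀ i a b, IntervalIntegrable (fun x => if x ≤ z i then (1 : ℝ) else 0) volume a b := by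
    intro i a b
    refine (intervalIntegrable_const (c := (1 : ℝ))).mono_fun
      (Measurable.ite measurableSet_Iic measurable_const measurable_const).aestronglyMeasurable ?_
    exact Eventually.of_forall fun x => by dsimp only; split_ifs <;> simp
  have hone : ∀ i, ∫ x in (0 : ℝ)..1, (if x ≤ z i then (1 : ℝ) else 0) = z i := by
    intro i
    rw [← intervalIntegral.integral_add_adjacent_intervals (hi i 0 (z i)) (hi i (z i) 1),
      integral_eq_of_const (c := 1) (h01 i).1 (fun x hx => if_pos hx.2),
      integral_eq_of_const (c := 0) (h01 i).2 (fun x hx => if_neg (not_le.2 hx.1))]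
    ring
  unfold halfQ
  simp_rw [prod_eq_alternating hz]
  rw [intervalIntegral.integral_sub intervalIntegrable_const, intervalIntegral.integral_const_mul,
    intervalIntegral.integral_finsetSum]
  · simp_rw [intervalIntegral.integral_const_mul, hone]
    simp
  · exact fun i _ => (hi i 0 1).const_mul _
  · refine IntervalIntegrable.const_mul ?_ _
    have := IntervalIntegrable.sum (μ := volume) (a := 0) (b := 1) Finset.univ
      (f := fun (i : Fin n) x => (-1 : ℝ) ^ (n - 1 - (i : ℕ)) * (if x ≤ z i then (1 : ℝ) else 0))
      fun i _ => (hi i 0 1).const_mul _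
    simpa only [Finset.sum_fn] using this

lemma halfQ_perm {n : ℕ} (z : Fin n → ℝ) (σ : Equiv.Perm (Fin n)) (x : ℝ) :
    halfQ (z ∘ σ) x = halfQ z x := by
  have : halfPat (z ∘ σ) = halfPat z := by
    funext s
    exact Equiv.prod_comp σ fun i => if s ≤ z i then (-1 : ℝ) else 1
  unfold halfQ
  rw [this]

lemma halfH_perm {n : ℕ} (z : Fin n → ℝ) (σ : Equiv.Perm (Fin n)) :
    halfH (z ∘ σ) = halfH z := by
  simp only [halfH, halfQ_perm]

/-- One interface at `1/2` and all others at the pole. -/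
lemma admK_nonempty {n : ℕ} (hn : 1 ≤ n) : (admK n).Nonempty := by
  let i₀ : Fin n := ⟨0, hn⟩
  let z : Fin n → ℝ := Function.update 1 i₀ (1 / 2)
  refine ⟨z, ⟨fun i => ?_, fun i => ?_⟩, ?_⟩
  · simp only [z, Function.update_apply]; split_ifs <;> simp
  · simp only [z, Function.update_apply]; split_ifs <;> norm_num
  · -- On `(0, 1/2]` and `(1/2, 1]` the pattern is constant, with opposite signs.
    have h1 : ∀ x ∈ Ioc (0 : ℝ) (1 / 2), halfPat z x = (-1) ^ n := by
      intro x hx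
      have : ∀ i, x ≤ z i := fun i => by
        simp only [z, Function.update_apply, Pi.one_apply]
        split_ifs <;> linarith [hx.2]
      simp [halfPat, this]
    have h2 : ∀ x ∈ Ioc (1 / 2 : ℝ) 1, halfPat z x = -(-1) ^ n := by
      intro x hx
      have h3 : halfPat z x * (-1) ^ n = -1 := by
        have : ((-1 : ℝ)) ^ n = ∏ _i : Fin n, (-1 : ℝ) := by simp
        rw [this]
        unfold halfPat
        rw [← Finset.prod_mul_distrib, Finset.prod_eq_single i₀]
        · rw [if_neg (by simpa [z] using hx.1)]; norm_num
        · rintro k - hk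
          rw [if_pos (by simpa [z, hk] using hx.2)]; norm_num
        · simp
      have h4 : ((-1 : ℝ) ^ n) * (-1) ^ n = 1 := by rw [← mul_pow]; norm_num
      calc halfPat z x = halfPat z x * (((-1 : ℝ) ^ n) * (-1) ^ n) := by rw [h4, mul_one]
        _ = _ := by rw [← mul_assoc, h3]; ring
    rw [halfQ_split z 0 (1 / 2), integral_eq_of_const (by norm_num) h1]
    unfold halfQ
    rw [integral_eq_of_const (by norm_num) h2]
    ring


/-- Theorem: existence of an axisymmetric local minimizer.
For every `n ≥ 1` there is `γ₀ > 0` such that for every `γ ≥ γ₀` the energy `F_γ` admits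
a local minimizer in `M ∩ Z`. -/
theorem exists_axisymmetric_local_minimizer (n : ℕ) (hn : 1 ≤ n) :
    ∃ γ₀ > (0 : ℝ), ∀ γ ≥ γ₀,
      ∃ zstar ∈ massM n ∩ simplexZ n, ∃ ε > (0 : ℝ),
        ∀ z ∈ massM n ∩ simplexZ n, dist z zstar < ε →
          symEnergy n γ zstar ≤ symEnergy n γ z := by
  obtain ⟨z₀, hz₀, hz₀min⟩ :=
    (isCompact_admK n).exists_isMinOn (admK_nonempty hn) halfH_continuous.continuousOn
  -- The energy gap of the degenerate configurations.
  obtain ⟨c, hc, hgap⟩ : ∃ c, halfH z₀ < c ∧ ∀ z ∈ admK n, ¬ Nondeg z → c ≤ halfH z := by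
    have hB : IsCompact (admK n ∩ {z | Nondeg z}ᶜ) :=
      (isCompact_admK n).inter_right (isOpen_nondeg n).isClosed_compl
    rcases (admK n ∩ {z | Nondeg z}ᶜ).eq_empty_or_nonempty with he | hne
    · refine ⟨halfH z₀ + 1, by linarith, fun z hz hd => ?_⟩
      have : z ∈ admK n ∩ {z | Nondeg z}ᶜ := ⟨hz, hd⟩
      rw [he] at this
      exact absurd this (Set.notMem_empty z)
    · obtain ⟨z₁, hz₁, hmin⟩ := hB.exists_isMinOn hne halfH_continuous.continuousOn
      refine ⟨halfH z₁, ?_, fun z hz hd => hmin ⟨hz, hd⟩⟩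
      obtain ⟨w, hw, hlt⟩ := exists_better _ z₁ hz₁.1 hz₁.2 rfl
      exact (hz₀min hw).trans_lt hlt
  have hcpos : 0 < c - halfH z₀ := by linarith
  refine ⟨n / (c - halfH z₀) + 1, by positivity, fun γ hγ => ?_⟩
  have hγn : (n : ℝ) < γ * (c - halfH z₀) := by
    have : (n : ℝ) / (c - halfH z₀) < γ := by linarith
    rwa [div_lt_iff₀ hcpos] at this
  have hγ0 : 0 < γ := lt_of_lt_of_le (by positivity) hγ
  let E : (Fin n → ℝ) → ℝ := fun z => 2 * ∑ i, Real.sqrt (1 - z i ^ 2) + γ * (2 * halfH z)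
  have hE : Continuous E := by
    have := @halfH_continuous n
    fun_prop
  obtain ⟨z, hz, hzmin⟩ :=
    (isCompact_admK n).exists_isMinOn (admK_nonempty hn) hE.continuousOn
  have hnd : Nondeg z := by
    by_contra hd
    have h1 := hgap z hz hd
    have h2 : E z ≤ E z₀ := hzmin hz₀
    have h3 : 0 ≤ ∑ i, Real.sqrt (1 - z i ^ 2) :=
      Finset.sum_nonneg fun i _ => Real.sqrt_nonneg _
    have h4 : ∑ i, Real.sqrt (1 - z₀ i ^ 2) ≤ n := by
      calc ∑ i, Real.sqrt (1 - z₀ i ^ 2) ≤ ∑ _i : Fin n, (1 : ℝ) :=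
            Finset.sum_le_sum fun i _ => Real.sqrt_le_one.2 (by nlinarith [sq_nonneg (z₀ i)])
        _ = n := by simp
    have h5 : γ * c ≤ γ * halfH z := mul_le_mul_of_nonneg_left h1 hγ0.le
    simp only [E] at h2
    nlinarith
  -- The minimizer is put in increasing order.
  let σ := Tuple.sort z
  have hmono : Monotone (z ∘ σ) := Tuple.monotone_sort z
  have hinj : Function.Injective (z ∘ σ) := by
    refine Function.Injective.comp (fun i j h => ?_) σ.injective
    by_contra hij
    exact hnd.1 i j hij h
  have hzσ : z ∘ σ ∈ admK n :=
    ⟨⟨fun i => hz.1.1 (σ i), fun i => hz.1.2 (σ i)⟩, by rw [halfQ_perm]; exact hz.2⟩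
  have hEσ : E (z ∘ σ) = E z := by
    simp only [E, halfH_perm]
    congr 2
    exact Equiv.sum_comp σ fun i => Real.sqrt (1 - z i ^ 2)
  refine ⟨WithLp.toLp 2 (z ∘ σ), ⟨?_, ?_, ?_⟩, 1, one_pos, ?_⟩
  · have := halfQ_zero_eq hmono fun i => ⟨hzσ.1.1 i, hzσ.1.2 i⟩
    rw [hzσ.2] at this
    change ∑ i : Fin n, (-1 : ℝ) ^ (n - 1 - (i : ℕ)) * (z ∘ σ) i = 1 / 2
    linarith
  · exact hmono.strictMono_of_injective hinj
  · exact fun i => hnd.2 (σ i)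
  · rintro y ⟨hyM, hymono, hy01⟩ -
    have hy : y.ofLp ∈ admK n := by
      refine ⟨⟨fun i => (hy01 i).1.le, fun i => (hy01 i).2.le⟩, ?_⟩
      rw [halfQ_zero_eq hymono.monotone fun i => Set.Ioo_subset_Icc_self (hy01 i)]
      have : ∑ i : Fin n, (-1 : ℝ) ^ (n - 1 - (i : ℕ)) * y i = 1 / 2 := hyM
      linarith
    have h1 := symEnergy_eq hzσ γ
    have h2 := symEnergy_eq hy γ
    rw [WithLp.toLp_ofLp] at h2
    rw [h1, h2]
    exact hEσ.le.trans (hzmin hy)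
end

section
/- For every γ > 0 there exists N ∈ ℕ such that: if an axisymmetric configuration −1 = z₀ < z₁ < ⋯ < z_n < z_{n+1} = 1 is a critical point of E_γ, then n ≤ N. In other words, for fixed γ > 0 the number of interfaces of an axisymmetric critical point is bounded from above, and in particular no axisymmetric critical point has infinitely many interfaces. -/
/-! ### Three consecutive interfaces on one side of the equator -/

theorem continuousOn_weight {ξ : ℝ → ℝ}
    (hL : ∀ s ∈ Set.Icc (-1 : ℝ) 1, ∀ t ∈ Set.Icc (-1 : ℝ) 1, |ξ s - ξ t| ≤ 2 * |s - t|) :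
    ContinuousOn ξ (Set.Icc (-1) 1) := by
  have : LipschitzOnWith 2 ξ (Set.Icc (-1) 1) := by
    refine LipschitzOnWith.of_dist_le_mul ?_
    intro s hs t ht
    simpa [Real.dist_eq] using hL s hs t ht
  exact this.continuousOn

theorem continuousOn_div_weight {ξ : ℝ → ℝ} (hc : ContinuousOn ξ (Set.Icc (-1) 1)) :
    ContinuousOn (fun s => ξ s / (1 - s ^ 2)) (Set.Ioo (-1) 1) := by
  refine (hc.mono Set.Ioo_subset_Icc_self).div (by fun_prop) ?_
  intro s hs
  have : 0 < 1 - s ^ 2 := by nlinarith [hs.1, hs.2]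
  exact this.ne'

theorem intervalIntegrable_div_weight {ξ : ℝ → ℝ} (hc : ContinuousOn ξ (Set.Icc (-1) 1))
    {a b : ℝ} (ha : a ∈ Set.Ioo (-1 : ℝ) 1) (hb : b ∈ Set.Ioo (-1 : ℝ) 1) :
    IntervalIntegrable (fun s => ξ s / (1 - s ^ 2)) MeasureTheory.volume a b := by
  apply ContinuousOn.intervalIntegrable
  exact (continuousOn_div_weight hc).mono (Set.ordConnected_Ioo.uIcc_subset ha hb)

theorem abs_div_weight_le_two {ξ : ℝ → ℝ}
    (hL : ∀ s ∈ Set.Icc (-1 : ℝ) 1, ∀ t ∈ Set.Icc (-1 : ℝ) 1, |ξ s - ξ t| ≤ 2 * |s - t|)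
    (h1 : ξ 1 = 0) {s : ℝ} (hs0 : 0 ≤ s) (hs1 : s < 1) : |ξ s / (1 - s ^ 2)| ≤ 2 := by
  have hp : 0 < 1 - s ^ 2 := by nlinarith
  rw [abs_div, abs_of_pos hp, div_le_iff₀ hp]
  have := hL s ⟨by linarith, hs1.le⟩ 1 ⟨by norm_num, le_refl _⟩
  rw [h1, sub_zero, abs_of_neg (show s - 1 < 0 by linarith)] at this
  nlinarith

/-- If the integrals of `ξ / (1 - s²)` over two adjacent intervals do not have the same strict sign,
then `ξ` vanishes on their union. -/
theorem exists_zero_of_integrals {ξ : ℝ → ℝ} (hc : ContinuousOn ξ (Set.Icc (-1) 1))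
    {a b c : ℝ} (ha : -1 < a) (hab : a < b) (hbc : b < c) (hc1 : c < 1)
    (hAB : (∫ s in a..b, ξ s / (1 - s ^ 2)) * (∫ s in b..c, ξ s / (1 - s ^ 2)) ≤ 0) :
    ∃ s ∈ Set.Icc a c, ξ s = 0 := by
  by_contra! hne
  have hpos : ∀ s ∈ Set.Icc a c, 0 < ξ b * ξ s := by
    intro s hs
    by_contra! hle
    have hsub : Set.uIcc b s ⊆ Set.Icc a c :=
      Set.ordConnected_Icc.uIcc_subset ⟨hab.le, hbc.le⟩ hs
    have hsub' : Set.Icc a c ⊆ Set.Icc (-1) 1 := Set.Icc_subset_Icc ha.le hc1.le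
    have h0 : (0 : ℝ) ∈ Set.uIcc (ξ b) (ξ s) := by
      rw [Set.mem_uIcc]
      rcases mul_nonpos_iff.1 hle with h | h
      · exact Or.inr ⟨h.2, h.1⟩
      · exact Or.inl ⟨h.1, h.2⟩
    obtain ⟨t, ht, ht0⟩ := intermediate_value_uIcc (hc.mono (hsub.trans hsub')) h0
    exact hne t (hsub ht) ht0
  have key : ∀ p q : ℝ, a ≤ p → p < q → q ≤ c →
      0 < ξ b * ∫ s in p..q, ξ s / (1 - s ^ 2) := by
    intro p q hp hpq hq
    rw [← intervalIntegral.integral_const_mul]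
    refine intervalIntegral.intervalIntegral_pos_of_pos_on ?_ ?_ hpq
    · exact (intervalIntegrable_div_weight hc ⟨by linarith, by linarith⟩
        ⟨by linarith, by linarith⟩).const_mul _
    · intro s hs
      have h2 : 0 < 1 - s ^ 2 := by nlinarith [hs.1, hs.2]
      rw [← mul_div_assoc]
      exact div_pos (hpos s ⟨by linarith [hs.1], by linarith [hs.2]⟩) h2
  have hA := key a b le_rfl hab hbc.le
  have hB := key b c hab.le hbc le_rfl
  nlinarith [mul_pos hA hB, mul_nonneg (sq_nonneg (ξ b)) (neg_nonneg.2 hAB)]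

theorem le_div_sqrt {x : ℝ} (h0 : 0 ≤ x) (h1 : x < 1) : x ≤ x / √(1 - x ^ 2) := by
  have hp : 0 < √(1 - x ^ 2) := Real.sqrt_pos.2 (by nlinarith)
  rw [le_div_iff₀ hp]
  have : √(1 - x ^ 2) ≤ 1 := Real.sqrt_le_one.2 (by nlinarith)
  nlinarith

/-- Three consecutive interfaces in the northern hemisphere: the last gap is at least `1/(16γ)`. -/
theorem gap_of_nonneg {γ : ℝ} (hγ : 0 < γ) {ξ : ℝ → ℝ}
    (hL : ∀ s ∈ Set.Icc (-1 : ℝ) 1, ∀ t ∈ Set.Icc (-1 : ℝ) 1, |ξ s - ξ t| ≤ 2 * |s - t|)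
    (h1 : ξ 1 = 0) {a b c ε l : ℝ} (hε : ε = 1 ∨ ε = -1)
    (ha : 0 ≤ a) (hab : a < b) (hbc : b < c) (hc1 : c < 1)
    (ea : ε * (a / √(1 - a ^ 2)) + 4 * γ * (∫ s in (0 : ℝ)..a, ξ s / (1 - s ^ 2)) = l)
    (eb : -ε * (b / √(1 - b ^ 2)) + 4 * γ * (∫ s in (0 : ℝ)..b, ξ s / (1 - s ^ 2)) = l)
    (ec : ε * (c / √(1 - c ^ 2)) + 4 * γ * (∫ s in (0 : ℝ)..c, ξ s / (1 - s ^ 2)) = l) :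
    1 / (16 * γ) ≤ c - b := by
  have hcont := continuousOn_weight hL
  have h0m : (0 : ℝ) ∈ Set.Ioo (-1 : ℝ) 1 := by constructor <;> norm_num
  have hia := intervalIntegrable_div_weight hcont h0m (b := a) ⟨by linarith, by linarith⟩
  have hib := intervalIntegrable_div_weight hcont h0m (b := b) ⟨by linarith, by linarith⟩
  have hic := intervalIntegrable_div_weight hcont h0m (b := c) ⟨by linarith, by linarith⟩
  have hA := intervalIntegral.integral_interval_sub_left hib hia
  have hB := intervalIntegral.integral_interval_sub_left hic hib
  have ga := le_div_sqrt ha (by linarith)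
  have gb := le_div_sqrt (x := b) (by linarith) (by linarith)
  have gc := le_div_sqrt (x := c) (by linarith) (by linarith)
  set A := ∫ s in a..b, ξ s / (1 - s ^ 2) with hAdef
  set B := ∫ s in b..c, ξ s / (1 - s ^ 2) with hBdef
  set Ga := a / √(1 - a ^ 2)
  set Gb := b / √(1 - b ^ 2)
  set Gc := c / √(1 - c ^ 2)
  have hA' : ε * (Ga + Gb) = 4 * γ * A := by rw [← hA]; linarith
  have hB' : -ε * (Gb + Gc) = 4 * γ * B := by rw [← hB]; linarith
  have hε2 : ε * ε = 1 := by rcases hε with h | h <;> simp [h]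
  have hprod : A * B ≤ 0 := by
    have h2 : (4 * γ) ^ 2 * (A * B) = -((Ga + Gb) * (Gb + Gc)) := by
      have : (4 * γ * A) * (4 * γ * B) = -(ε * ε) * ((Ga + Gb) * (Gb + Gc)) := by
        rw [← hA', ← hB']; ring
      rw [hε2] at this; linarith
    have h3 : 0 ≤ (Ga + Gb) * (Gb + Gc) := by
      apply mul_nonneg <;> linarith
    by_contra! h4
    have : 0 < (4 * γ) ^ 2 * (A * B) := by positivity
    linarith
  obtain ⟨t, ht, ht0⟩ := exists_zero_of_integrals hcont (by linarith) hab hbc hc1 hprod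
  have hw : ∀ s ∈ Set.uIoc b c, ‖ξ s / (1 - s ^ 2)‖ ≤ 4 * c := by
    intro s hs
    rw [Set.uIoc_of_le hbc.le] at hs
    rw [Real.norm_eq_abs]
    rcases le_total (1 / 2) c with h | h
    · exact (abs_div_weight_le_two hL h1 (by linarith [hs.1]) (by linarith [hs.2])).trans
        (by linarith)
    · have hs0 : 0 ≤ s := by linarith [hs.1]
      have hsc := hs.2
      have hp : 1 / 2 ≤ 1 - s ^ 2 := by nlinarith
      rw [abs_div, abs_of_pos (show 0 < 1 - s ^ 2 by linarith), div_le_iff₀ (by linarith)]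
      have h5 := hL s ⟨by linarith, by linarith⟩ t ⟨by linarith [ht.1], by linarith [ht.2]⟩
      rw [ht0, sub_zero] at h5
      have h6 : |s - t| ≤ c := by
        rw [abs_le]; constructor <;> linarith [ht.1, ht.2]
      nlinarith
  have hBb := intervalIntegral.norm_integral_le_of_norm_le_const hw
  rw [← hBdef, Real.norm_eq_abs, abs_of_pos (show 0 < c - b by linarith)] at hBb
  have hc0 : 0 < c := by linarith
  have h7 : Gb + Gc = 4 * γ * |B| := by
    have : |-ε * (Gb + Gc)| = |4 * γ * B| := by rw [hB']
    rw [abs_mul, abs_mul, abs_of_pos (show 0 < 4 * γ by linarith),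
      abs_of_nonneg (show 0 ≤ Gb + Gc by linarith)] at this
    rcases hε with h | h <;> simpa [h] using this
  have h8 : c * 1 ≤ c * ((c - b) * (16 * γ)) := by
    have : 4 * γ * |B| ≤ 4 * γ * (4 * c * (c - b)) :=
      mul_le_mul_of_nonneg_left hBb (by linarith)
    linarith
  rw [div_le_iff₀ (by linarith)]
  exact le_of_mul_le_mul_left h8 hc0

/-- Three consecutive interfaces in the southern hemisphere: the first gap is at least `1/(16γ)`. -/
theorem gap_of_nonpos {γ : ℝ} (hγ : 0 < γ) {ξ : ℝ → ℝ}
    (hL : ∀ s ∈ Set.Icc (-1 : ℝ) 1, ∀ t ∈ Set.Icc (-1 : ℝ) 1, |ξ s - ξ t| ≤ 2 * |s - t|)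
    (h1 : ξ (-1) = 0) {a b c ε l : ℝ} (hε : ε = 1 ∨ ε = -1)
    (ha : -1 < a) (hab : a < b) (hbc : b < c) (hc : c ≤ 0)
    (ea : ε * (a / √(1 - a ^ 2)) + 4 * γ * (∫ s in (0 : ℝ)..a, ξ s / (1 - s ^ 2)) = l)
    (eb : -ε * (b / √(1 - b ^ 2)) + 4 * γ * (∫ s in (0 : ℝ)..b, ξ s / (1 - s ^ 2)) = l)
    (ec : ε * (c / √(1 - c ^ 2)) + 4 * γ * (∫ s in (0 : ℝ)..c, ξ s / (1 - s ^ 2)) = l) :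
    1 / (16 * γ) ≤ b - a := by
  have hrefl : ∀ x : ℝ, (∫ s in (0 : ℝ)..(-x), ξ (-s) / (1 - s ^ 2))
      = -∫ s in (0 : ℝ)..x, ξ s / (1 - s ^ 2) := by
    intro x
    have := intervalIntegral.integral_comp_neg (a := 0) (b := -x)
      (fun s => ξ s / (1 - s ^ 2))
    simp only [neg_sq, neg_neg, neg_zero] at this
    rw [this, intervalIntegral.integral_symm]
  have := gap_of_nonneg hγ (ξ := fun s => ξ (-s)) (a := -c) (b := -b) (c := -a) (ε := ε)
    (l := -l) ?_ h1 hε (by linarith) (by linarith) (by linarith) (by linarith) ?_ ?_ ?_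
  · linarith
  · intro s hs t ht
    have h := hL (-s) ⟨by linarith [hs.2], by linarith [hs.1]⟩ (-t)
      ⟨by linarith [ht.2], by linarith [ht.1]⟩
    rwa [show -s - -t = -(s - t) by ring, abs_neg] at h
  · rw [hrefl, neg_sq, neg_div]; linarith
  · rw [hrefl, neg_sq, neg_div]; linarith
  · rw [hrefl, neg_sq, neg_div]; linarith

/-! ### Properties of `ξ` -/

theorem abs_pattern (n : ℕ) (z : ℕ → ℝ) (t : ℝ) : |pattern n z t| = 1 := by
  simp [pattern]

theorem measurable_pattern (n : ℕ) (z : ℕ → ℝ) : Measurable (pattern n z) := by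
  have h : pattern n z = fun t => (∏ i ∈ Finset.Icc 1 n, if z i ≤ t then (-1 : ℝ) else 1) * (-1) := by
    funext t
    rw [pattern, pow_succ, ← Finset.prod_filter, Finset.prod_const]
  rw [h]
  refine Measurable.mul_const (Finset.measurable_prod _ fun i _ => ?_) _
  exact Measurable.ite measurableSet_Ici measurable_const measurable_const

theorem intervalIntegrable_pattern (n : ℕ) (z : ℕ → ℝ) (a b : ℝ) :
    IntervalIntegrable (pattern n z) MeasureTheory.volume a b := by
  refine (intervalIntegrable_const (c := (1 : ℝ))).mono_fun
    (measurable_pattern n z).aestronglyMeasurable ?_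
  filter_upwards with t
  simp [abs_pattern]

theorem abs_mass_le (n : ℕ) (z : ℕ → ℝ) : |mass n z| ≤ 1 := by
  have := intervalIntegral.norm_integral_le_of_norm_le_const (a := -1) (b := 1) (C := 1)
    (f := pattern n z) (fun t _ => by rw [Real.norm_eq_abs, abs_pattern])
  rw [Real.norm_eq_abs] at this
  norm_num at this
  rw [mass, abs_mul]
  norm_num
  linarith

theorem xi_lipschitz (n : ℕ) (z : ℕ → ℝ) (s t : ℝ) :
    |xi n z s - xi n z t| ≤ 2 * |s - t| := by
  have hi : ∀ x y, IntervalIntegrable (fun s => pattern n z s - mass n z)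
      MeasureTheory.volume x y :=
    fun x y => (intervalIntegrable_pattern n z x y).sub intervalIntegrable_const
  rw [xi, xi, intervalIntegral.integral_interval_sub_left (hi _ _) (hi _ _), ← Real.norm_eq_abs]
  refine intervalIntegral.norm_integral_le_of_norm_le_const fun x _ => ?_
  rw [Real.norm_eq_abs]
  have := abs_sub (pattern n z x) (mass n z)
  linarith [abs_pattern n z x, abs_mass_le n z]

theorem xi_neg_one (n : ℕ) (z : ℕ → ℝ) : xi n z (-1) = 0 := by simp [xi]

theorem xi_one (n : ℕ) (z : ℕ → ℝ) : xi n z 1 = 0 := by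
  rw [xi, intervalIntegral.integral_sub (intervalIntegrable_pattern n z _ _)
    intervalIntegrable_const, intervalIntegral.integral_const, mass, smul_eq_mul]
  ring

/-! ### Counting interfaces -/

theorem gap_four {γ : ℝ} (hγ : 0 < γ) {n : ℕ} {z : ℕ → ℝ} (hz : IsConfig n z)
    (hcrit : IsCritical γ n z) {k : ℕ} (hk : 1 ≤ k) (hkn : k + 4 ≤ n) :
    1 / (16 * γ) ≤ z (k + 4) - z k := by
  obtain ⟨h0, hn1, hmono⟩ := hz
  obtain ⟨l, hl⟩ := hcrit
  have eq : ∀ i, 1 ≤ i → i ≤ n → (-1 : ℝ) ^ (i + 1) * (z i / √(1 - z i ^ 2))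
      + 4 * γ * (∫ s in (0 : ℝ)..(z i), xi n z s / (1 - s ^ 2)) = l := by
    intro i hi hin
    have := hl i hi hin
    rwa [pot, mul_div_assoc] at this
  have hlo : -1 < z k := h0 ▸ hmono 0 k (by omega) (by omega)
  have hhi : z (k + 4) < 1 := hn1 ▸ hmono (k + 4) (n + 1) (by omega) (by omega)
  have m1 := hmono k (k + 1) (by omega) (by omega)
  have m2 := hmono (k + 1) (k + 2) (by omega) (by omega)
  have m3 := hmono (k + 2) (k + 3) (by omega) (by omega)
  have m4 := hmono (k + 3) (k + 4) (by omega) (by omega)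
  have e0 := eq k (by omega) (by omega)
  have e1 := eq (k + 1) (by omega) (by omega)
  have e2 := eq (k + 2) (by omega) (by omega)
  have e3 := eq (k + 3) (by omega) (by omega)
  have e4 := eq (k + 4) (by omega) (by omega)
  have hε : (-1 : ℝ) ^ (k + 1) = 1 ∨ (-1 : ℝ) ^ (k + 1) = -1 := neg_one_pow_eq_or ℝ _
  rw [show (-1 : ℝ) ^ (k + 1 + 1) = -(-1) ^ (k + 1) by ring] at e1
  rw [show (-1 : ℝ) ^ (k + 2 + 1) = (-1) ^ (k + 1) by ring] at e2
  rw [show (-1 : ℝ) ^ (k + 3 + 1) = -(-1) ^ (k + 1) by ring] at e3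
  rw [show (-1 : ℝ) ^ (k + 4 + 1) = (-1) ^ (k + 1) by ring] at e4
  have hL : ∀ s ∈ Set.Icc (-1 : ℝ) 1, ∀ t ∈ Set.Icc (-1 : ℝ) 1,
      |xi n z s - xi n z t| ≤ 2 * |s - t| := fun s _ t _ => xi_lipschitz n z s t
  rcases le_total 0 (z (k + 2)) with h | h
  · have := gap_of_nonneg hγ hL (xi_one n z) hε h m3 m4 hhi e2 e3 e4
    linarith
  · have := gap_of_nonpos hγ hL (xi_neg_one n z) hε hlo m1 m2 h e0 e1 e2
    linarith

/-- Proposition: number of interfaces.  For every `γ > 0` there is an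
upper bound `N` on the number of interfaces of any axisymmetric critical point of `E_γ`. -/
theorem number_of_interfaces_bounded (γ : ℝ) (hγ : 0 < γ) :
    ∃ N : ℕ, ∀ n : ℕ, 1 ≤ n → ∀ z : ℕ → ℝ,
      IsConfig n z → IsCritical γ n z → n ≤ N := by
  obtain ⟨J, hJ⟩ := exists_nat_gt (2 / (1 / (16 * γ)))
  refine ⟨4 * J, fun n hn z hz hcrit => ?_⟩
  by_contra! hlt
  have hind : ∀ j : ℕ, 1 + 4 * j ≤ n → -1 + j * (1 / (16 * γ)) ≤ z (1 + 4 * j) := by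
    intro j
    induction j with
    | zero =>
      intro _
      have := hz.2.2 0 1 (by omega) (by omega)
      rw [hz.1] at this
      simpa using this.le
    | succ j ih =>
      intro hj
      have h1 := ih (by omega)
      have h2 := gap_four hγ hz hcrit (k := 1 + 4 * j) (by omega) (by omega)
      rw [show 1 + 4 * (j + 1) = 1 + 4 * j + 4 by ring]
      push_cast
      linarith
  have h1 := hind J (by omega)
  have h2 := hz.2.2 (1 + 4 * J) (n + 1) (by omega) le_rfl
  rw [hz.2.1] at h2
  rw [div_lt_iff₀ (by positivity)] at hJ
  linarith
end

section
/- Let I ⊂ (0,∞) be a nondegenerate interval. If an axisymmetric configuration −1 < z₁ < ⋯ < z_n < 1 is a critical point of E_γ for every γ ∈ I (with the constant λ allowed to depend on γ), then either n = 1 (a single cap), or n = 2 and z₂ = −z₁ (a symmetric double cap). -/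
/-- The function is `tan ∘ arcsin` on `(-1, 1)`. -/
lemma div_sqrt_injOn : Set.InjOn (fun x : ℝ => x / Real.sqrt (1 - x ^ 2)) (Set.Ioo (-1) 1) := by
  intro x hx y hy h
  apply Real.injOn_arcsin (Set.Ioo_subset_Icc_self hx) (Set.Ioo_subset_Icc_self hy)
  rw [Real.arcsin_eq_arctan hx, Real.arcsin_eq_arctan hy]
  exact congrArg Real.arctan h

/-- Criticality for two distinct values of `γ` decouples the curvature from the potential. -/
lemma curvature_eq {a b : ℝ} (hab : a < b) {n : ℕ} {z : ℕ → ℝ}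
    (ha : IsCritical a n z) (hb : IsCritical b n z) {j k : ℕ}
    (hj : 1 ≤ j) (hjn : j ≤ n) (hk : 1 ≤ k) (hkn : k ≤ n) :
    (-1 : ℝ) ^ (j + 1) * z j / Real.sqrt (1 - z j ^ 2) =
      (-1 : ℝ) ^ (k + 1) * z k / Real.sqrt (1 - z k ^ 2) := by
  obtain ⟨l, hl⟩ := ha
  obtain ⟨m, hm⟩ := hb
  have h1 := hl j hj hjn
  have h2 := hl k hk hkn
  have h3 := hm j hj hjn
  have h4 := hm k hk hkn
  have hp : (b - a) * (pot n z (z j) - pot n z (z k)) = 0 := by linarith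
  have hp' : pot n z (z j) = pot n z (z k) :=
    sub_eq_zero.mp ((mul_eq_zero.mp hp).resolve_left (sub_ne_zero.mpr hab.ne'))
  rw [hp'] at h1
  linarith

/-- Proposition: critical for an interval of `γ`-values.  If an
axisymmetric configuration is a critical point of `E_γ` for every `γ` in a nondegenerate
interval `I ⊆ (0,∞)`, then it is a single cap (`n = 1`) or a symmetric double cap
(`n = 2` with `z 2 = -z 1`). -/
theorem critical_on_interval_single_or_double_cap
    (I : Set ℝ) (hI : I.OrdConnected) (hIpos : I ⊆ Set.Ioi (0 : ℝ))
    (hInd : ∃ a ∈ I, ∃ b ∈ I, a < b)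
    (n : ℕ) (hn : 1 ≤ n) (z : ℕ → ℝ) (hz : IsConfig n z)
    (hcrit : ∀ γ ∈ I, IsCritical γ n z) :
    n = 1 ∨ (n = 2 ∧ z 2 = -z 1) := by
  obtain ⟨a, ha, b, hb, hab⟩ := hInd
  obtain ⟨h0, h1, hmono⟩ := hz
  have hmem : ∀ k, 1 ≤ k → k ≤ n → z k ∈ Set.Ioo (-1 : ℝ) 1 := fun k hk hkn =>
    ⟨h0 ▸ hmono 0 k (by omega) (by omega), h1 ▸ hmono k (n + 1) (by omega) le_rfl⟩
  have hcurv := fun k hk hkn =>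
    curvature_eq hab (hcrit a ha) (hcrit b hb) (j := k) (k := 1) hk hkn le_rfl hn
  have hn2 : n ≤ 2 := by
    by_contra hcon
    have h := hcurv 3 (by omega) (by omega)
    have h31 : z 3 = z 1 := by
      apply div_sqrt_injOn (hmem 3 (by omega) (by omega)) (hmem 1 le_rfl hn)
      norm_num at h
      exact h
    exact (hmono 1 3 (by omega) (by omega)).ne' h31
  rcases (by omega : n = 1 ∨ n = 2) with h | h
  · exact Or.inl h
  · refine Or.inr ⟨h, ?_⟩
    have hc := hcurv 2 (by omega) (by omega)
    have hm1 := hmem 1 le_rfl hn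
    apply div_sqrt_injOn (hmem 2 (by omega) (by omega))
      ⟨by linarith [hm1.2], by linarith [hm1.1]⟩
    norm_num [neg_div] at hc ⊢
    linarith
end

section
/- Let z₁ ∈ (0,1) and γ > 0. The axisymmetric configuration with three interfaces (−z₁, 0, z₁) is a critical point of E_γ if and only if z₁/√(1−z₁²) + 4γ·(z₁ log(1+z₁) + (1−z₁) log(1−z₁)) = 0, i.e. if and only if γ = −(z₁/√(1−z₁²)) / (4·(z₁ log(1+z₁) + (1−z₁) log(1−z₁))). In particular, the uniformly distributed configuration (−1/2, 0, 1/2) is a critical point of E_γ exactly for γ = −1/(2√3·log(3/4)). -/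
open MeasureTheory intervalIntegral

/-- The three-interface configuration `(-z₁, 0, z₁)`, padded by `±1`. -/
noncomputable def conf (z₁ : ℝ) : ℕ → ℝ :=
  fun k => if k = 0 then -1 else if k = 1 then -z₁ else if k = 2 then 0
    else if k = 3 then z₁ else 1

lemma pattern_conf (z₁ t : ℝ) (hz : 0 < z₁) :
    pattern 3 (conf z₁) t = if t < -z₁ then -1 else if t < 0 then 1 else
      if t < z₁ then -1 else 1 := by
  have hI : Finset.Icc 1 3 = ({1, 2, 3} : Finset ℕ) := by decide
  have c1 : conf z₁ 1 = -z₁ := by simp [conf]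
  have c2 : conf z₁ 2 = 0 := by simp [conf]
  have c3 : conf z₁ 3 = z₁ := by simp [conf]
  rw [pattern, hI, Finset.card_filter, Finset.sum_insert (by decide),
    Finset.sum_insert (by decide), Finset.sum_singleton, c1, c2, c3]
  split_ifs <;> first | (exfalso; linarith) | norm_num

/-- Integration of a function that is constant in the interior of the interval. -/
lemma integral_of_const_Ioo {f : ℝ → ℝ} {a b c : ℝ} (hab : a ≤ b)
    (h : ∀ t ∈ Set.Ioo a b, f t = c) :
    IntervalIntegrable f volume a b ∧ ∫ t in a..b, f t = c * (b - a) := by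
  constructor
  · rw [intervalIntegrable_iff_integrableOn_Ioo_of_le hab]
    exact (integrableOn_const (C := c) (by simp) (by simp)).congr_fun
      (fun t ht => (h t ht).symm) measurableSet_Ioo
  · rw [integral_of_le hab, integral_Ioc_eq_integral_Ioo,
      setIntegral_congr_fun measurableSet_Ioo h, ← integral_Ioc_eq_integral_Ioo,
      ← integral_of_le hab]
    simp [mul_comm]

lemma pattern_piece₁ {z₁ b : ℝ} (hz : 0 < z₁) (hb : -1 ≤ b) (hb' : b ≤ -z₁) :
    IntervalIntegrable (pattern 3 (conf z₁)) volume (-1) b ∧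
      ∫ t in (-1 : ℝ)..b, pattern 3 (conf z₁) t = -1 * (b - -1) := by
  refine integral_of_const_Ioo hb fun t ht => ?_
  rw [pattern_conf _ _ hz, if_pos (ht.2.trans_le hb')]

lemma pattern_piece₂ {z₁ b : ℝ} (hz : 0 < z₁) (hb : -z₁ ≤ b) (hb' : b ≤ 0) :
    IntervalIntegrable (pattern 3 (conf z₁)) volume (-z₁) b ∧
      ∫ t in (-z₁)..b, pattern 3 (conf z₁) t = 1 * (b - -z₁) := by
  refine integral_of_const_Ioo hb fun t ht => ?_
  rw [pattern_conf _ _ hz, if_neg (not_lt.2 ht.1.le), if_pos (ht.2.trans_le hb')]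

lemma pattern_piece₃ {z₁ b : ℝ} (hz : 0 < z₁) (hb : 0 ≤ b) (hb' : b ≤ z₁) :
    IntervalIntegrable (pattern 3 (conf z₁)) volume 0 b ∧
      ∫ t in (0 : ℝ)..b, pattern 3 (conf z₁) t = -1 * (b - 0) := by
  refine integral_of_const_Ioo hb fun t ht => ?_
  have := ht.1
  rw [pattern_conf _ _ hz, if_neg (by linarith), if_neg (by linarith),
    if_pos (ht.2.trans_le hb')]

lemma pattern_piece₄ {z₁ : ℝ} (hz : 0 < z₁) (hz' : z₁ ≤ 1) :
    IntervalIntegrable (pattern 3 (conf z₁)) volume z₁ 1 ∧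
      ∫ t in z₁..1, pattern 3 (conf z₁) t = 1 * (1 - z₁) := by
  refine integral_of_const_Ioo hz' fun t ht => ?_
  have := ht.1
  rw [pattern_conf _ _ hz, if_neg (by linarith), if_neg (by linarith), if_neg (by linarith)]

lemma mass_conf {z₁ : ℝ} (hz : z₁ ∈ Set.Ioo (0 : ℝ) 1) : mass 3 (conf z₁) = 0 := by
  obtain ⟨h0, h1⟩ := hz
  obtain ⟨i1, e1⟩ := pattern_piece₁ (b := -z₁) h0 (by linarith) le_rfl
  obtain ⟨i2, e2⟩ := pattern_piece₂ (b := 0) h0 (by linarith) le_rfl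
  obtain ⟨i3, e3⟩ := pattern_piece₃ (b := z₁) h0 h0.le le_rfl
  obtain ⟨i4, e4⟩ := pattern_piece₄ h0 h1.le
  rw [mass, ← integral_add_adjacent_intervals ((i1.trans i2).trans i3) i4,
    ← integral_add_adjacent_intervals (i1.trans i2) i3,
    ← integral_add_adjacent_intervals i1 i2, e1, e2, e3, e4]
  ring

lemma xi_conf {z₁ t : ℝ} (hz : z₁ ∈ Set.Ioo (0 : ℝ) 1) (ht : |t| ≤ z₁) :
    xi 3 (conf z₁) t = 2 * z₁ - 1 - |t| := by
  have hm := mass_conf hz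
  obtain ⟨h0, h1⟩ := hz
  obtain ⟨ht1, ht2⟩ := abs_le.1 ht
  obtain ⟨i1, e1⟩ := pattern_piece₁ (b := -z₁) h0 (by linarith) le_rfl
  simp only [xi, hm, sub_zero]
  rcases le_total t 0 with h | h
  · obtain ⟨i2, e2⟩ := pattern_piece₂ h0 ht1 h
    rw [← integral_add_adjacent_intervals i1 i2, e1, e2, abs_of_nonpos h]
    ring
  · obtain ⟨i2, e2⟩ := pattern_piece₂ (b := 0) h0 (by linarith) le_rfl
    obtain ⟨i3, e3⟩ := pattern_piece₃ h0 h ht2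
    rw [← integral_add_adjacent_intervals (i1.trans i2) i3,
      ← integral_add_adjacent_intervals i1 i2, e1, e2, e3, abs_of_nonneg h]
    ring

lemma pot_conf {z₁ : ℝ} (hz : z₁ ∈ Set.Ioo (0 : ℝ) 1) :
    pot 3 (conf z₁) z₁ = z₁ * Real.log (1 + z₁) + (1 - z₁) * Real.log (1 - z₁) := by
  have hxi := fun t => xi_conf (t := t) hz
  obtain ⟨h0, h1⟩ := hz
  have hcongr : pot 3 (conf z₁) z₁ = ∫ s in (0 : ℝ)..z₁, (2 * z₁ - 1 - s) / (1 - s ^ 2) := by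
    refine integral_congr fun s hs => ?_
    rw [Set.uIcc_of_le h0.le] at hs
    simp only [hxi s (by rw [abs_of_nonneg hs.1]; exact hs.2), abs_of_nonneg hs.1]
  rw [hcongr, integral_eq_sub_of_hasDerivAt
    (f := fun s => z₁ * Real.log (1 + s) + (1 - z₁) * Real.log (1 - s))]
  · simp
  · intro s hs
    rw [Set.uIcc_of_le h0.le] at hs
    obtain ⟨hs0, hs1⟩ := hs
    have hp : (1 + s) ≠ 0 := by linarith
    have hn : (1 - s) ≠ 0 := by linarith
    have hq : 1 - s ^ 2 ≠ 0 := by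
      rw [show 1 - s ^ 2 = (1 + s) * (1 - s) by ring]; exact mul_ne_zero hp hn
    have hd := ((((hasDerivAt_id s).const_add 1).log hp).const_mul z₁).add
      ((((hasDerivAt_id s).const_sub 1).log hn).const_mul (1 - z₁))
    refine hd.congr_deriv ?_
    simp only [id]
    rw [show 1 - s ^ 2 = (1 + s) * (1 - s) by ring]
    field_simp
    ring
  · refine ContinuousOn.intervalIntegrable (ContinuousOn.div (by fun_prop) (by fun_prop) ?_)
    intro s hs
    rw [Set.uIcc_of_le h0.le] at hs
    nlinarith [hs.1, hs.2]

lemma pot_conf_neg {z₁ : ℝ} (hz : z₁ ∈ Set.Ioo (0 : ℝ) 1) :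
    pot 3 (conf z₁) (-z₁) = -pot 3 (conf z₁) z₁ := by
  have hxi := fun t => xi_conf (t := t) hz
  have hz0 := hz.1
  have hrefl := integral_comp_neg (a := 0) (b := z₁)
    (fun s => xi 3 (conf z₁) s / (1 - s ^ 2))
  rw [pot, pot, integral_symm, ← neg_zero, ← hrefl, neg_zero, neg_inj]
  refine integral_congr fun s hs => ?_
  rw [Set.uIcc_of_le hz0.le] at hs
  have hs' : |s| ≤ z₁ := by rw [abs_of_nonneg hs.1]; exact hs.2
  simp only [hxi s hs', hxi (-s) (by rwa [abs_neg]), abs_neg, neg_sq]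

lemma isCritical_conf_iff {z₁ : ℝ} (hz : z₁ ∈ Set.Ioo (0 : ℝ) 1) (γ : ℝ) :
    IsCritical γ 3 (conf z₁) ↔ z₁ / Real.sqrt (1 - z₁ ^ 2)
      + 4 * γ * (z₁ * Real.log (1 + z₁) + (1 - z₁) * Real.log (1 - z₁)) = 0 := by
  have c1 : conf z₁ 1 = -z₁ := by simp [conf]
  have c2 : conf z₁ 2 = 0 := by simp [conf]
  have c3 : conf z₁ 3 = z₁ := by simp [conf]
  have p0 : pot 3 (conf z₁) 0 = 0 := by simp [pot]
  rw [← pot_conf hz]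
  constructor
  · rintro ⟨lam, h⟩
    have h2 := h 2 (by norm_num) (by norm_num)
    have h3 := h 3 (by norm_num) (by norm_num)
    rw [c2, p0] at h2
    rw [c3] at h3
    norm_num at h2 h3
    linarith
  · intro h
    refine ⟨0, fun k hk hk' => ?_⟩
    interval_cases k
    · rw [c1, pot_conf_neg hz, neg_sq z₁]
      linear_combination -h
    · rw [c2, p0]
      simp
    · rw [c3]
      linear_combination h

/-- For `z₁ ∈ (0,1)` and `γ > 0`, the axisymmetric configuration with
three interfaces `(-z₁, 0, z₁)` is a critical point of `E_γ` iff
`z₁/√(1−z₁²) + 4γ(z₁ log(1+z₁) + (1−z₁) log(1−z₁)) = 0`, iff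
`γ = −(z₁/√(1−z₁²)) / (4(z₁ log(1+z₁) + (1−z₁) log(1−z₁)))`.  In particular, for
`z₁ = 1/2` (the uniformly distributed configuration `(-1/2, 0, 1/2)`) criticality holds
exactly for `γ = −1/(2√3 log(3/4))`. -/
theorem three_interface_criticality (z₁ : ℝ) (hz₁ : z₁ ∈ Set.Ioo (0 : ℝ) 1)
    (γ : ℝ) (hγ : 0 < γ) :
    (IsCritical γ 3
        (fun k => if k = 0 then -1 else if k = 1 then -z₁ else if k = 2 then 0
          else if k = 3 then z₁ else 1) ↔
      z₁ / Real.sqrt (1 - z₁ ^ 2)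
        + 4 * γ * (z₁ * Real.log (1 + z₁) + (1 - z₁) * Real.log (1 - z₁)) = 0) ∧
    (IsCritical γ 3
        (fun k => if k = 0 then -1 else if k = 1 then -z₁ else if k = 2 then 0
          else if k = 3 then z₁ else 1) ↔
      γ = -(z₁ / Real.sqrt (1 - z₁ ^ 2))
            / (4 * (z₁ * Real.log (1 + z₁) + (1 - z₁) * Real.log (1 - z₁)))) ∧
    (z₁ = 1 / 2 →
      (IsCritical γ 3
          (fun k => if k = 0 then -1 else if k = 1 then -z₁ else if k = 2 then 0
            else if k = 3 then z₁ else 1) ↔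
        γ = -1 / (2 * Real.sqrt 3 * Real.log (3 / 4)))) := by
  have h1 := isCritical_conf_iff hz₁ γ
  have h2 : z₁ / Real.sqrt (1 - z₁ ^ 2)
        + 4 * γ * (z₁ * Real.log (1 + z₁) + (1 - z₁) * Real.log (1 - z₁)) = 0 ↔
      γ = -(z₁ / Real.sqrt (1 - z₁ ^ 2))
            / (4 * (z₁ * Real.log (1 + z₁) + (1 - z₁) * Real.log (1 - z₁))) := by
    have hpos : 0 < z₁ / Real.sqrt (1 - z₁ ^ 2) :=
      div_pos hz₁.1 (Real.sqrt_pos.2 (by nlinarith [hz₁.1, hz₁.2]))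
    generalize z₁ * Real.log (1 + z₁) + (1 - z₁) * Real.log (1 - z₁) = L
    generalize z₁ / Real.sqrt (1 - z₁ ^ 2) = x at hpos
    -- If `L = 0`, both sides fail: the left since `x > 0`, the right since `γ > 0 = -x / 0`.
    rcases eq_or_ne L 0 with rfl | hL
    · simp [hpos.ne', hγ.ne']
    · rw [eq_div_iff (by positivity)]
      constructor <;> intro h <;> linarith
  refine ⟨h1, h1.trans h2, ?_⟩
  intro hhalf
  refine (h1.trans h2).trans ?_
  have hL : z₁ * Real.log (1 + z₁) + (1 - z₁) * Real.log (1 - z₁)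
      = 1 / 2 * Real.log (3 / 4) := by
    rw [hhalf, show (3 / 4 : ℝ) = (1 + 1 / 2) * (1 - 1 / 2) by norm_num,
      Real.log_mul (by norm_num) (by norm_num)]
    ring
  have hs : z₁ / Real.sqrt (1 - z₁ ^ 2) = 1 / Real.sqrt 3 := by
    rw [hhalf, show (1 - (1 / 2) ^ 2 : ℝ) = 3 / 2 ^ 2 by norm_num,
      Real.sqrt_div (by norm_num), Real.sqrt_sq (by norm_num)]
    field_simp
  rw [hL, hs, show -(1 / Real.sqrt 3) / (4 * (1 / 2 * Real.log (3 / 4)))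
    = -1 / (2 * Real.sqrt 3 * Real.log (3 / 4)) by ring]
end

section
/- The limit as z₁ → 0⁺ of the quantity −(z₁/√(1−z₁²)) / (4·(z₁ log(1+z₁) + (1−z₁) log(1−z₁))) equals 1/4. (This quantity is the unique value of γ for which the axisymmetric pattern with three interfaces at −z₁, 0, z₁ is a critical point of E_γ; hence these critical points exist only for γ > 1/4.) -/
/-! Let `g z = z log (1 + z) + (1 - z) log (1 - z)`. Since `g 0 = 0` and `g' 0 = -1`, the quotient
`g z / z` tends to `-1`. Dividing numerator and denominator by `z`, the expression becomes
`-(1 / √(1 - z²)) / (4 (g z / z))`, whose limit at `0` is `-1 / (4 · (-1)) = 1/4`. -/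

theorem hasDerivAt_gamma_denominator :
    HasDerivAt (fun z : ℝ => z * Real.log (1 + z) + (1 - z) * Real.log (1 - z)) (-1) 0 := by
  have hadd : HasDerivAt (fun z : ℝ => 1 + z) 1 0 := (hasDerivAt_id (0 : ℝ)).const_add 1
  have hsub : HasDerivAt (fun z : ℝ => 1 - z) (-1) 0 := (hasDerivAt_id (0 : ℝ)).const_sub 1
  have h := ((hasDerivAt_id (0 : ℝ)).mul (hadd.log (by norm_num))).add
    (hsub.mul (hsub.log (by norm_num)))
  exact h.congr_deriv (by norm_num)

/-- The value
`γ(z₁) = −(z₁/√(1−z₁²)) / (4(z₁ log(1+z₁) + (1−z₁) log(1−z₁)))` of the parameter for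
which the three-interface pattern `(-z₁, 0, z₁)` is critical tends to `1/4` as
`z₁ → 0⁺`; hence these critical points exist only for `γ > 1/4`. -/
theorem gamma_three_interfaces_limit :
    Filter.Tendsto
      (fun z₁ : ℝ => -(z₁ / Real.sqrt (1 - z₁ ^ 2))
        / (4 * (z₁ * Real.log (1 + z₁) + (1 - z₁) * Real.log (1 - z₁))))
      (nhdsWithin 0 (Set.Ioi 0)) (nhds (1 / 4)) := by
  have hslope := (hasDerivAt_iff_tendsto_slope_zero.1 hasDerivAt_gamma_denominator).mono_left
    (nhdsWithin_mono (0 : ℝ) (fun z (hz : 0 < z) => hz.ne'))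
  have hsqrt : Filter.Tendsto (fun z : ℝ => Real.sqrt (1 - z ^ 2))
      (nhdsWithin 0 (Set.Ioi 0)) (nhds 1) := by
    have hcont : Continuous (fun z : ℝ => Real.sqrt (1 - z ^ 2)) := by fun_prop
    have h := hcont.tendsto 0
    norm_num at h
    exact h.mono_left nhdsWithin_le_nhds
  have hlim := (hsqrt.inv₀ one_ne_zero).neg.div (hslope.const_mul 4) (by norm_num)
  have hvalue : (-(1 : ℝ)⁻¹ / (4 * -1)) = 1 / 4 := by norm_num
  rw [hvalue] at hlim
  refine hlim.congr' ?_
  filter_upwards [self_mem_nhdsWithin] with z hz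
  have hz0 : z ≠ 0 := ne_of_gt hz
  simp only [Pi.div_apply, zero_add, add_zero, sub_zero, Real.log_one, mul_zero, smul_eq_mul]
  rw [← mul_div_mul_left _ _ hz0]
  congr 1
  · ring
  · field_simp
end

section
/- Let z₁ ∈ (1/2,1) and γ > 0. The axisymmetric configuration with four interfaces (−z₁, 1/2−z₁, z₁−1/2, z₁) (which has mass 0) is a critical point of E_γ if and only if z₁/√(1−z₁²) + (z₁−1/2)/√(1−(z₁−1/2)²) = 4γ·(−z₁ log((1+z₁)/(1/2+z₁)) − (z₁−1) log((3/2−z₁)/(1−z₁))). In particular, the uniformly distributed configuration (−3/4, −1/4, 1/4, 3/4) is a critical point of E_γ exactly for γ = (3/√7 + 1/√15) / (3 log(5/7) + log 3). -/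
/-- The configuration `(-z₁, 1/2 - z₁, z₁ - 1/2, z₁)`, padded by `-1` at index `0` and by `1`
from index `5` on. -/
noncomputable def fourConfig (z₁ : ℝ) : ℕ → ℝ :=
  fun k => if k = 0 then -1 else if k = 1 then -z₁ else if k = 2 then 1 / 2 - z₁
    else if k = 3 then z₁ - 1 / 2 else if k = 4 then z₁ else 1

/-- The Heaviside function with jump at `c`. -/
noncomputable def heav (c t : ℝ) : ℝ := if c ≤ t then 1 else 0

lemma heav_intervalIntegrable (c x y : ℝ) :
    IntervalIntegrable (heav c) MeasureTheory.volume x y := by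
  apply Monotone.intervalIntegrable
  intro s t hst
  unfold heav
  split_ifs <;> linarith

lemma integral_heav (c x y : ℝ) :
    ∫ s in x..y, heav c s = ((y - c) + |y - c|) / 2 - ((x - c) + |x - c|) / 2 := by
  refine MeasureTheory.integral_eq_of_hasDerivAt_off_countable
    (fun s => ((s - c) + |s - c|) / 2) (heav c) (Set.countable_singleton c) ?_ ?_
    (heav_intervalIntegrable c x y)
  · fun_prop
  · rintro s ⟨-, hs⟩
    rcases lt_or_gt_of_ne (show s ≠ c from hs) with h | h
    · have h0 : HasDerivAt (fun _ : ℝ => (0 : ℝ)) (heav c s) s := by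
        simpa [heav, not_le.mpr h] using hasDerivAt_const s (0 : ℝ)
      refine h0.congr_of_eventuallyEq ?_
      filter_upwards [Iio_mem_nhds h] with r hr
      rw [abs_of_neg (sub_neg.mpr hr)]; ring
    · have h0 : HasDerivAt (fun r : ℝ => r - c) (heav c s) s := by
        simpa [heav, h.le] using (hasDerivAt_id s).sub_const c
      refine h0.congr_of_eventuallyEq ?_
      filter_upwards [Ioi_mem_nhds h] with r hr
      rw [abs_of_pos (sub_pos.mpr hr)]; ring

lemma pattern_fourConfig {z₁ : ℝ} (h : z₁ ∈ Set.Ioo (1 / 2 : ℝ) 1) (t : ℝ) :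
    pattern 4 (fourConfig z₁) t = -1 + 2 * heav (-z₁) t - 2 * heav (1 / 2 - z₁) t
      + 2 * heav (z₁ - 1 / 2) t - 2 * heav z₁ t := by
  obtain ⟨h1, h2⟩ := h
  have hI : Finset.Icc 1 4 = ({1, 2, 3, 4} : Finset ℕ) := by decide
  have hcard : ((Finset.Icc 1 4).filter (fun i => fourConfig z₁ i ≤ t)).card =
      (if -z₁ ≤ t then 1 else 0) + ((if 1 / 2 - z₁ ≤ t then 1 else 0) +
        ((if z₁ - 1 / 2 ≤ t then 1 else 0) + (if z₁ ≤ t then 1 else 0))) := by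
    rw [Finset.card_filter, hI, Finset.sum_insert (by decide), Finset.sum_insert (by decide),
      Finset.sum_insert (by decide), Finset.sum_singleton]
    simp [fourConfig]
  unfold pattern heav
  rw [hcard]
  split_ifs <;> first | linarith | norm_num

/-- The pattern has an explicit piecewise linear primitive. -/
lemma integral_pattern {z₁ : ℝ} (h : z₁ ∈ Set.Ioo (1 / 2 : ℝ) 1) (t : ℝ) :
    ∫ s in (-1 : ℝ)..t, pattern 4 (fourConfig z₁) s =
      -t + |t + z₁| - |t + (z₁ - 1 / 2)| + |t - (z₁ - 1 / 2)| - |t - z₁| := by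
  have hi := fun c => (heav_intervalIntegrable c (-1) t).const_mul 2
  have hc : IntervalIntegrable (fun _ : ℝ => (-1 : ℝ)) MeasureTheory.volume (-1) t :=
    intervalIntegrable_const
  simp only [pattern_fourConfig h]
  rw [intervalIntegral.integral_sub (((hc.add (hi _)).sub (hi _)).add (hi _)) (hi _),
    intervalIntegral.integral_add ((hc.add (hi _)).sub (hi _)) (hi _),
    intervalIntegral.integral_sub (hc.add (hi _)) (hi _),
    intervalIntegral.integral_add hc (hi _)]
  simp only [intervalIntegral.integral_const_mul, integral_heav,
    intervalIntegral.integral_const, smul_eq_mul]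
  obtain ⟨h1, h2⟩ := h
  rw [abs_of_neg (show -1 - -z₁ < 0 by linarith),
    abs_of_neg (show -1 - (1 / 2 - z₁) < 0 by linarith),
    abs_of_neg (show -1 - (z₁ - 1 / 2) < 0 by linarith),
    abs_of_neg (show -1 - z₁ < 0 by linarith),
    show t - -z₁ = t + z₁ by ring, show t - (1 / 2 - z₁) = t + (z₁ - 1 / 2) by ring]
  ring

lemma mass_fourConfig {z₁ : ℝ} (h : z₁ ∈ Set.Ioo (1 / 2 : ℝ) 1) :
    mass 4 (fourConfig z₁) = 0 := by
  unfold mass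
  rw [integral_pattern h]
  obtain ⟨h1, h2⟩ := h
  rw [abs_of_pos (show 0 < 1 + z₁ by linarith),
    abs_of_pos (show 0 < 1 + (z₁ - 1 / 2) by linarith),
    abs_of_pos (show 0 < 1 - (z₁ - 1 / 2) by linarith),
    abs_of_pos (show 0 < 1 - z₁ by linarith)]
  ring

lemma xi_fourConfig {z₁ : ℝ} (h : z₁ ∈ Set.Ioo (1 / 2 : ℝ) 1) (t : ℝ) :
    xi 4 (fourConfig z₁) t =
      -t + |t + z₁| - |t + (z₁ - 1 / 2)| + |t - (z₁ - 1 / 2)| - |t - z₁| := by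
  unfold xi
  rw [mass_fourConfig h]
  simpa using integral_pattern h t

/-- The potential is even because `ξ` is odd. -/
lemma pot_neg {z₁ : ℝ} (h : z₁ ∈ Set.Ioo (1 / 2 : ℝ) 1) (t : ℝ) :
    pot 4 (fourConfig z₁) (-t) = pot 4 (fourConfig z₁) t := by
  have hodd : ∀ s, xi 4 (fourConfig z₁) (-s) = -xi 4 (fourConfig z₁) s := by
    intro s
    rw [xi_fourConfig h, xi_fourConfig h, ← abs_neg (-s + z₁), ← abs_neg (-s + (z₁ - 1 / 2)),
      ← abs_neg (-s - (z₁ - 1 / 2)), ← abs_neg (-s - z₁)]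
    ring_nf
  unfold pot
  have key := intervalIntegral.integral_comp_neg (a := 0) (b := t)
    (fun s => xi 4 (fourConfig z₁) s / (1 - s ^ 2))
  simp only [hodd, neg_sq, neg_zero, neg_div, intervalIntegral.integral_neg] at key
  rw [intervalIntegral.integral_symm, ← key, neg_neg]

lemma pot_sub_pot {z₁ : ℝ} (h : z₁ ∈ Set.Ioo (1 / 2 : ℝ) 1) :
    pot 4 (fourConfig z₁) z₁ - pot 4 (fourConfig z₁) (z₁ - 1 / 2) =
      -z₁ * Real.log ((1 + z₁) / (1 / 2 + z₁))
        - (z₁ - 1) * Real.log ((3 / 2 - z₁) / (1 - z₁)) := by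
  have h1 := h.1
  have h2 := h.2
  have hint : ∀ y, 0 ≤ y → y < 1 → IntervalIntegrable
      (fun s => xi 4 (fourConfig z₁) s / (1 - s ^ 2)) MeasureTheory.volume 0 y := by
    intro y hy0 hy1
    apply ContinuousOn.intervalIntegrable
    rw [Set.uIcc_of_le hy0]
    simp only [xi_fourConfig h]
    refine ContinuousOn.div (by fun_prop) (by fun_prop) ?_
    rintro s ⟨hs0, hs1⟩
    nlinarith
  unfold pot
  rw [intervalIntegral.integral_interval_sub_left (hint _ (by linarith) h2)
    (hint _ (by linarith) (by linarith))]
  -- The antiderivative comes from the partial fraction decomposition of `(s - 2b)/(1 - s²)`.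
  rw [intervalIntegral.integral_eq_sub_of_hasDerivAt
    (f := fun s => -z₁ * Real.log (1 + s) + (z₁ - 1) * Real.log (1 - s))]
  · rw [Real.log_div (by linarith) (by linarith), Real.log_div (by linarith) (by linarith),
      show 1 + (z₁ - 1 / 2) = 1 / 2 + z₁ by ring, show 1 - (z₁ - 1 / 2) = 3 / 2 - z₁ by ring]
    ring
  · intro s hs
    rw [Set.uIcc_of_le (by linarith)] at hs
    obtain ⟨hs0, hs1⟩ := hs
    have e1 : 1 + s ≠ 0 := by linarith
    have e2 : 1 - s ≠ 0 := by linarith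
    have e3 : 1 - s ^ 2 ≠ 0 := by nlinarith
    have d1 := (((hasDerivAt_id s).const_add 1).log e1).const_mul (-z₁)
    have d2 := (((hasDerivAt_id s).const_sub 1).log e2).const_mul (z₁ - 1)
    refine (d1.add d2).congr_deriv ?_
    rw [xi_fourConfig h, abs_of_pos (show 0 < s + z₁ by linarith),
      abs_of_pos (show 0 < s + (z₁ - 1 / 2) by linarith),
      abs_of_nonneg (show 0 ≤ s - (z₁ - 1 / 2) by linarith),
      abs_of_nonpos (show s - z₁ ≤ 0 by linarith)]
    rw [show 1 - s ^ 2 = (1 + s) * (1 - s) by ring]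
    simp only [id]
    field_simp
    ring
  · exact (hint _ (by linarith) (by linarith)).symm.trans (hint _ (by linarith) h2)

lemma isCritical_fourConfig_iff {z₁ : ℝ} (h : z₁ ∈ Set.Ioo (1 / 2 : ℝ) 1) (γ : ℝ) :
    IsCritical γ 4 (fourConfig z₁) ↔
      z₁ / Real.sqrt (1 - z₁ ^ 2) + (z₁ - 1 / 2) / Real.sqrt (1 - (z₁ - 1 / 2) ^ 2)
        = 4 * γ * (-z₁ * Real.log ((1 + z₁) / (1 / 2 + z₁))
            - (z₁ - 1) * Real.log ((3 / 2 - z₁) / (1 - z₁))) := by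
  rw [← pot_sub_pot h]
  have c1 : fourConfig z₁ 1 = -z₁ := by simp [fourConfig]
  have c2 : fourConfig z₁ 2 = -(z₁ - 1 / 2) := by simp [fourConfig]
  have c3 : fourConfig z₁ 3 = z₁ - 1 / 2 := by simp [fourConfig]
  have c4 : fourConfig z₁ 4 = z₁ := by simp [fourConfig]
  constructor
  · rintro ⟨lam, hl⟩
    have e3 := hl 3 (by norm_num) (by norm_num)
    have e4 := hl 4 (by norm_num) (by norm_num)
    rw [c3] at e3
    rw [c4] at e4
    norm_num [neg_div] at e3 e4 ⊢
    linarith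
  · intro he
    refine ⟨(z₁ - 1 / 2) / Real.sqrt (1 - (z₁ - 1 / 2) ^ 2)
      + 4 * γ * pot 4 (fourConfig z₁) (z₁ - 1 / 2), ?_⟩
    intro k hk1 hk4
    interval_cases k
    · rw [c1, pot_neg h, neg_sq, mul_neg, neg_div]
      norm_num at he ⊢
      linarith
    · rw [c2, pot_neg h, neg_sq]
      ring
    · rw [c3]
      norm_num
    · rw [c4]
      norm_num [neg_div] at he ⊢
      linarith

/-- For `z₁ ∈ (1/2,1)` and `γ > 0`, the axisymmetric configuration
with four interfaces `(-z₁, 1/2−z₁, z₁−1/2, z₁)` (which has mass 0) is a critical point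
of `E_γ` iff `z₁/√(1−z₁²) + (z₁−1/2)/√(1−(z₁−1/2)²)
= 4γ(−z₁ log((1+z₁)/(1/2+z₁)) − (z₁−1) log((3/2−z₁)/(1−z₁)))`.  In particular, for
`z₁ = 3/4` (the uniformly distributed configuration `(-3/4,-1/4,1/4,3/4)`) criticality
holds exactly for `γ = (3/√7 + 1/√15)/(3 log(5/7) + log 3)`. -/
theorem four_interface_criticality (z₁ : ℝ) (hz₁ : z₁ ∈ Set.Ioo (1 / 2 : ℝ) 1)
    (γ : ℝ) (hγ : 0 < γ) :
    (IsCritical γ 4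
        (fun k => if k = 0 then -1 else if k = 1 then -z₁ else if k = 2 then 1 / 2 - z₁
          else if k = 3 then z₁ - 1 / 2 else if k = 4 then z₁ else 1) ↔
      z₁ / Real.sqrt (1 - z₁ ^ 2) + (z₁ - 1 / 2) / Real.sqrt (1 - (z₁ - 1 / 2) ^ 2)
        = 4 * γ * (-z₁ * Real.log ((1 + z₁) / (1 / 2 + z₁))
            - (z₁ - 1) * Real.log ((3 / 2 - z₁) / (1 - z₁)))) ∧
    (z₁ = 3 / 4 →
      (IsCritical γ 4
          (fun k => if k = 0 then -1 else if k = 1 then -z₁ else if k = 2 then 1 / 2 - z₁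
            else if k = 3 then z₁ - 1 / 2 else if k = 4 then z₁ else 1) ↔
        γ = (3 / Real.sqrt 7 + 1 / Real.sqrt 15)
              / (3 * Real.log (5 / 7) + Real.log 3))) := by
  have hmain := isCritical_fourConfig_iff hz₁ γ
  refine ⟨hmain, ?_⟩
  intro hz
  refine hmain.trans ?_
  have hpos : 0 < 3 * Real.log (5 / 7) + Real.log 3 := by
    have e : 3 * Real.log (5 / 7) + Real.log 3 = Real.log (375 / 343) := by
      rw [show (375 / 343 : ℝ) = (5 / 7) ^ 3 * 3 by norm_num,
        Real.log_mul (by norm_num) (by norm_num), Real.log_pow]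
      norm_num
    rw [e]
    exact Real.log_pos (by norm_num)
  have s16 : Real.sqrt 16 = 4 := by
    rw [show (16 : ℝ) = 4 ^ 2 by norm_num]
    exact Real.sqrt_sq (by norm_num)
  have s1 : Real.sqrt (1 - (3 / 4) ^ 2) = Real.sqrt 7 / 4 := by
    rw [show (1 - (3 / 4) ^ 2 : ℝ) = 7 / 16 by norm_num, Real.sqrt_div (by norm_num), s16]
  have s2 : Real.sqrt (1 - (3 / 4 - 1 / 2) ^ 2) = Real.sqrt 15 / 4 := by
    rw [show (1 - (3 / 4 - 1 / 2) ^ 2 : ℝ) = 15 / 16 by norm_num, Real.sqrt_div (by norm_num), s16]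
  have l1 : Real.log ((1 + 3 / 4) / (1 / 2 + 3 / 4)) = -Real.log (5 / 7) := by
    rw [← Real.log_inv]
    norm_num
  have l2 : Real.log ((3 / 2 - 3 / 4) / (1 - 3 / 4)) = Real.log 3 := by norm_num
  have p7 : Real.sqrt 7 ≠ 0 := by positivity
  have p15 : Real.sqrt 15 ≠ 0 := by positivity
  have hL : (3 / 4 : ℝ) / (Real.sqrt 7 / 4) + (3 / 4 - 1 / 2) / (Real.sqrt 15 / 4)
      = 3 / Real.sqrt 7 + 1 / Real.sqrt 15 := by
    field_simp
    ring
  rw [hz, s1, s2, l1, l2, hL, eq_div_iff hpos.ne']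
  constructor <;> intro hh <;> linarith
end
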